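/- arXiv:2005.00737 — 10 statements merged into one kernel-verified Lean document; each statement's English description precedes it below -/
import Mathlib

section
/- In H_{1,n+1}(q), for every n ≥ 1 and every integer k ≥ 1 the following identity holds: t_n^k = Σ_{j=1}^{k−1} q^{j−1}(q−1) t_{n−1}^j t_n^{k−j} g_n + q^{k−1} g_n t_{n−1}^k g_n. -/
/-!
Write `T = t_n`, `S = t_{n-1}`, `G = g_n`, so that `T = G S G`. The only facts needed are the
quadratic relation `G² = (q - 1) G + q` and the commutation `S T = T S`.

The commutation is the four-term relation `G S G S = S G S G`, proved by induction on `n`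
(`looping_braid`): the step from `n` to `n + 1` uses the braid relation between `g_n` and
`g_{n+1}` and the fact that `t_{n-1}` commutes with `g_{n+1}` (`looping_comm`).

The formula then follows by induction on `k` (`power_formula`): on multiplying the formula for
`T ^ k` on the left by `T`, the factor `T` passes through the powers of `S`, and the last term gives
`T G S^k G = G S G² S^k G = (q - 1) S^k T G + q G S^{k+1} G`.
-/

/-- The algebraic core of the induction step for the four-term relation: if `a, s` satisfy it,
`a, b` are braided and `b` commutes with `s`, then `b, a s a` satisfy it. -/
theorem four_term_step {A : Type*} [Monoid A] (a b s : A) (hbs : s * b = b * s)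
    (hab : a * b * a = b * a * b) (has : a * s * a * s = s * a * s * a) :
    b * (a * s * a) * b * (a * s * a) = (a * s * a) * b * (a * s * a) * b := by
  calc b * (a * s * a) * b * (a * s * a)
      = b * a * s * (a * b * a) * s * a := by simp only [mul_assoc]
    _ = b * a * (s * b) * a * (b * s) * a := by rw [hab]; simp only [mul_assoc]
    _ = b * a * (b * s) * a * (s * b) * a := by rw [hbs]
    _ = (b * a * b) * s * a * s * b * a := by simp only [mul_assoc]
    _ = a * b * (a * s * a * s) * b * a := by rw [← hab]; simp only [mul_assoc]
    _ = a * (b * s) * a * s * (a * b * a) := by rw [has]; simp only [mul_assoc]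
    _ = a * (s * b) * a * (s * b) * a * b := by rw [← hbs, hab]; simp only [mul_assoc]
    _ = a * s * b * a * (s * b) * a * b := by simp only [mul_assoc]
    _ = a * s * (b * a * b) * s * a * b := by rw [hbs]; simp only [mul_assoc]
    _ = (a * s * a) * b * (a * s * a) * b := by rw [← hab]; simp only [mul_assoc]

theorem looping_comm {A : Type*} [Monoid A] (t : A) (g tt : ℕ → A)
    (hct : ∀ i, 2 ≤ i → t * g i = g i * t)
    (hcm : ∀ i j, 1 ≤ i → i + 2 ≤ j → g i * g j = g j * g i)
    (htt0 : tt 0 = t) (htts : ∀ i, tt (i+1) = g (i+1) * tt i * g (i+1))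
    (i j : ℕ) (hij : i + 2 ≤ j) : tt i * g j = g j * tt i := by
  induction i with
  | zero => rw [htt0]; exact hct j hij
  | succ i ih =>
    have h1 : Commute (g (i+1)) (g j) := hcm (i+1) j (by omega) hij
    have h2 : Commute (tt i) (g j) := ih (by omega)
    rw [htts]
    exact (h1.mul_left h2).mul_left h1

theorem looping_braid {A : Type*} [Monoid A] (t : A) (g tt : ℕ → A)
    (hbt : g 1 * t * g 1 * t = t * g 1 * t * g 1)
    (hct : ∀ i, 2 ≤ i → t * g i = g i * t)
    (hbr : ∀ i, 1 ≤ i → g i * g (i+1) * g i = g (i+1) * g i * g (i+1))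
    (hcm : ∀ i j, 1 ≤ i → i + 2 ≤ j → g i * g j = g j * g i)
    (htt0 : tt 0 = t) (htts : ∀ i, tt (i+1) = g (i+1) * tt i * g (i+1)) (m : ℕ) :
    g (m+1) * tt m * g (m+1) * tt m = tt m * g (m+1) * tt m * g (m+1) := by
  induction m with
  | zero => rw [htt0]; exact hbt
  | succ m ih =>
    rw [htts m]
    exact four_term_step _ _ _ (looping_comm t g tt hct hcm htt0 htts m (m+2) le_rfl)
      (hbr (m+1) (by omega)) ih

/-- The power formula in any algebra containing `G, S, T` with `T = G S G`, `S T = T S` and the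
quadratic relation for `G`; the exponent `k` is written `m + 1`. -/
theorem power_formula {R : Type*} [CommRing R] {A : Type*} [Ring A] [Algebra R A]
    (q : R) (G S T : A) (hT : T = G * S * G) (hST : Commute S T)
    (hG : G * G = (q - 1) • G + q • (1 : A)) (m : ℕ) :
    T ^ (m+1)
      = (∑ j ∈ Finset.Icc 1 m, (q ^ (j - 1) * (q - 1)) • (S ^ j * T ^ (m + 1 - j) * G))
        + q ^ m • (G * S ^ (m+1) * G) := by
  induction m with
  | zero => simp [hT]
  | succ m ih =>
    have hlast : T * (G * S ^ (m+1) * G)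
        = (q - 1) • (S ^ (m+1) * T * G) + q • (G * S ^ (m+2) * G) := by
      calc T * (G * S ^ (m+1) * G) = G * S * (G * G) * S ^ (m+1) * G := by
            rw [hT]; simp only [mul_assoc]
        _ = (q - 1) • (G * S * G * S ^ (m+1) * G) + q • (G * (S * S ^ (m+1)) * G) := by
            rw [hG]
            simp only [mul_add, add_mul, mul_smul_comm, smul_mul_assoc, mul_one, mul_assoc]
        _ = _ := by rw [← hT, ← (hST.pow_left (m+1)).eq, ← pow_succ' S (m+1)]
    have hsum : ∀ j ∈ Finset.Icc 1 m,
        T * ((q ^ (j - 1) * (q - 1)) • (S ^ j * T ^ (m + 1 - j) * G))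
          = (q ^ (j - 1) * (q - 1)) • (S ^ j * T ^ (m + 1 + 1 - j) * G) := by
      intro j hj
      have hjm := (Finset.mem_Icc.mp hj).2
      rw [show m + 1 + 1 - j = (m + 1 - j) + 1 by omega, pow_succ' T, mul_smul_comm,
        ← mul_assoc, ← mul_assoc, ← (hST.pow_left j).eq, mul_assoc (S ^ j)]
    rw [pow_succ' T, ih, mul_add, Finset.mul_sum, Finset.sum_congr rfl hsum, mul_smul_comm, hlast,
      Finset.sum_Icc_succ_top (by omega), smul_add, smul_smul, smul_smul, ← pow_succ q m, ← add_assoc]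
    simp

/-- Lemma 2(i) of the paper: in `H_{1,n+1}(q)`, for `n ≥ 1` and `k ≥ 1`,
`t_n^k = ∑_{j=1}^{k-1} q^{j-1}(q-1) t_{n-1}^j t_n^{k-j} g_n + q^{k-1} g_n t_{n-1}^k g_n`. -/
theorem homflypt_stmt0
    {R : Type*} [CommRing R] {A : Type*} [Ring A] [Algebra R A]
    (q : Rˣ) (t tinv : A) (g ginv : ℕ → A)
    (ht : t * tinv = 1) (ht' : tinv * t = 1)
    (hg : ∀ i, g i * ginv i = 1) (hg' : ∀ i, ginv i * g i = 1)
    (hbt : g 1 * t * g 1 * t = t * g 1 * t * g 1)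
    (hct : ∀ i, 2 ≤ i → t * g i = g i * t)
    (hbr : ∀ i, 1 ≤ i → g i * g (i+1) * g i = g (i+1) * g i * g (i+1))
    (hcm : ∀ i j, 1 ≤ i → i + 2 ≤ j → g i * g j = g j * g i)
    (hq2 : ∀ i, 1 ≤ i → g i * g i = ((q : R) - 1) • g i + (q : R) • (1 : A))
    (tt ttinv : ℕ → A)
    (htt0 : tt 0 = t) (htts : ∀ i, tt (i+1) = g (i+1) * tt i * g (i+1))
    (htti0 : ttinv 0 = tinv)
    (httis : ∀ i, ttinv (i+1) = ginv (i+1) * ttinv i * ginv (i+1))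
    (n k : ℕ) (hn : 1 ≤ n) (hk : 1 ≤ k) :
    tt n ^ k
      = (∑ j ∈ Finset.Icc 1 (k - 1),
            ((q : R) ^ (j - 1) * ((q : R) - 1)) • (tt (n-1) ^ j * tt n ^ (k - j) * g n))
        + ((q : R) ^ (k - 1)) • (g n * tt (n-1) ^ k * g n) := by
  obtain ⟨n, rfl⟩ := Nat.exists_eq_add_of_le' hn
  obtain ⟨k, rfl⟩ := Nat.exists_eq_add_of_le' hk
  have hST : Commute (tt n) (tt (n+1)) := by
    have h := looping_braid t g tt hbt hct hbr hcm htt0 htts n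
    rw [htts]
    simpa only [Commute, SemiconjBy, mul_assoc] using h.symm
  exact power_formula (q : R) (g (n+1)) (tt n) (tt (n+1)) (htts n) hST (hq2 (n+1) hn) k
end

section
/- In H_{1,n+2}(q), for every n ≥ 1 and every integer k ≥ 1 the following identity holds: t_n^k g_{n+1} = q^{−k+1} g_{n+1}^{−1} t_{n+1}^k + Σ_{j=1}^{k−1} q^{−j+1}(q^{−1}−1) t_n^{k−j} t_{n+1}^j. -/
/-!
Write `T = t_n`, `S = t_{n+1}`, `g = g_{n+1}`. Since `S = g T g`, we have `T g = g⁻¹ S`, which is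
the case `k = 1`. The quadratic relation gives `g⁻¹ = q⁻¹ g + (q⁻¹ - 1)`, hence
`T g⁻¹ = q⁻¹ g⁻¹ S + (q⁻¹ - 1) T` (`mul_ginv_of_quadratic`). Multiplying the identity for `k` on the
left by `T` and moving `T` past `g⁻¹` with this rule gives the identity for `k + 1`: the second
summand is the new term `j = k` of the sum.
-/

/-- The rule for moving `T` past `g⁻¹` when `T g = g⁻¹ S` and `g` satisfies the Hecke quadratic
relation. -/
lemma mul_ginv_of_quadratic {R : Type*} [CommRing R] {A : Type*} [Ring A] [Algebra R A]
    (q : Rˣ) (g h T S : A) (hgh : g * h = 1)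
    (hq2 : g * g = ((q : R) - 1) • g + (q : R) • (1 : A)) (hT : T * g = h * S) :
    T * h = ((q⁻¹ : Rˣ) : R) • (h * S) + (((q⁻¹ : Rˣ) : R) - 1) • T := by
  have h1 : g = ((q : R) - 1) • (1 : A) + (q : R) • h := by
    have := congrArg (· * h) hq2
    simpa [mul_assoc, add_mul, hgh] using this
  have h2 : h * S = ((q : R) - 1) • T + (q : R) • (T * h) := by
    rw [← hT]
    conv_lhs => rw [h1]
    simp [mul_add]
  rw [h2, smul_add, smul_smul, smul_smul, mul_sub, Units.inv_mul, one_smul, mul_one]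
  module

/-- Lemma 3(i) of the paper: in `H_{1,n+2}(q)`, for `n ≥ 1` and `k ≥ 1`,
`t_n^k g_{n+1} = q^{-k+1} g_{n+1}^{-1} t_{n+1}^k
  + ∑_{j=1}^{k-1} q^{-j+1}(q^{-1}-1) t_n^{k-j} t_{n+1}^j`. -/
theorem homflypt_stmt2
    {R : Type*} [CommRing R] {A : Type*} [Ring A] [Algebra R A]
    (q : Rˣ) (t tinv : A) (g ginv : ℕ → A)
    (ht : t * tinv = 1) (ht' : tinv * t = 1)
    (hg : ∀ i, g i * ginv i = 1) (hg' : ∀ i, ginv i * g i = 1)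
    (hbt : g 1 * t * g 1 * t = t * g 1 * t * g 1)
    (hct : ∀ i, 2 ≤ i → t * g i = g i * t)
    (hbr : ∀ i, 1 ≤ i → g i * g (i+1) * g i = g (i+1) * g i * g (i+1))
    (hcm : ∀ i j, 1 ≤ i → i + 2 ≤ j → g i * g j = g j * g i)
    (hq2 : ∀ i, 1 ≤ i → g i * g i = ((q : R) - 1) • g i + (q : R) • (1 : A))
    (tt ttinv : ℕ → A)
    (htt0 : tt 0 = t) (htts : ∀ i, tt (i+1) = g (i+1) * tt i * g (i+1))
    (htti0 : ttinv 0 = tinv)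
    (httis : ∀ i, ttinv (i+1) = ginv (i+1) * ttinv i * ginv (i+1))
    (n k : ℕ) (hn : 1 ≤ n) (hk : 1 ≤ k) :
    tt n ^ k * g (n+1)
      = ((q ^ (-(k : ℤ) + 1) : Rˣ) : R) • (ginv (n+1) * tt (n+1) ^ k)
        + ∑ j ∈ Finset.Icc 1 (k - 1),
            (((q ^ (-(j : ℤ) + 1) : Rˣ) : R) * (((q⁻¹ : Rˣ) : R) - 1)) •
              (tt n ^ (k - j) * tt (n+1) ^ j) := by
  have hT : tt n * g (n+1) = ginv (n+1) * tt (n+1) := by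
    rw [htts, ← mul_assoc, ← mul_assoc, hg', one_mul]
  have hTh := mul_ginv_of_quadratic q (g (n+1)) (ginv (n+1)) (tt n) (tt (n+1)) (hg _)
    (hq2 _ (by omega)) hT
  induction k, hk using Nat.le_induction with
  | base => simpa using hT
  | succ k hk ih =>
    obtain ⟨m, rfl⟩ : ∃ m, k = m + 1 := ⟨k - 1, by omega⟩
    have hc : ((q ^ (-((m + 1 + 1 : ℕ) : ℤ) + 1) : Rˣ) : R)
        = ((q ^ (-((m + 1 : ℕ) : ℤ) + 1) : Rˣ) : R) * ((q⁻¹ : Rˣ) : R) := by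
      rw [← Units.val_mul, ← zpow_sub_one]
      congr 2
      push_cast
      ring
    have hs : ∀ j ∈ Finset.Icc 1 m,
        tt n * (tt n ^ (m + 1 - j) * tt (n+1) ^ j) = tt n ^ (m + 1 + 1 - j) * tt (n+1) ^ j := by
      intro j hj
      have hj' := (Finset.mem_Icc.mp hj).2
      rw [← mul_assoc, ← pow_succ', show m + 1 - j + 1 = m + 1 + 1 - j by omega]
    rw [pow_succ', mul_assoc, ih, mul_add, hc]
    simp only [Nat.add_sub_cancel]
    rw [Finset.sum_Icc_succ_top (by omega), Finset.mul_sum]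
    have hsum : ∀ j ∈ Finset.Icc 1 m,
        tt n * ((((q ^ (-(j : ℤ) + 1) : Rˣ) : R) * (((q⁻¹ : Rˣ) : R) - 1)) •
          (tt n ^ (m + 1 - j) * tt (n+1) ^ j))
        = (((q ^ (-(j : ℤ) + 1) : Rˣ) : R) * (((q⁻¹ : Rˣ) : R) - 1)) •
          (tt n ^ (m + 1 + 1 - j) * tt (n+1) ^ j) := by
      intro j hj
      rw [mul_smul_comm, hs j hj]
    rw [Finset.sum_congr rfl hsum, mul_smul_comm, ← mul_assoc, hTh, add_mul, smul_mul_assoc,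
      smul_mul_assoc, mul_assoc, ← pow_succ', Nat.add_sub_cancel_left, pow_one]
    module
end

section
/- In H_{1,n+2}(q), for every n ≥ 1 and every integer k ≥ 1 the following identity holds: t_n^{−k} g_{n+1}^{−1} = q^{k−1} g_{n+1} t_{n+1}^{−k} + Σ_{j=1}^{k−1} q^{j−1}(q−1) t_n^{−k+j} t_{n+1}^{−j}. -/
/-!
Write `T = t_n⁻¹`, `U = t_{n+1}⁻¹` and `G = g_{n+1}`. By definition `U = G⁻¹ T G⁻¹`, so
`T G⁻¹ = G U`, which is the case `k = 1`. The quadratic relation gives `G = q G⁻¹ + (q - 1)`, hence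
`T G = q G U + (q - 1) T`. Multiplying the identity for `k` on the left by `T` and rewriting `T G`
in the leading term yields the identity for `k + 1`: the summand `(q - 1) T` contributes the new
term `j = k` of the sum. The induction is `hecke_inv_pow_mul_inv`.
-/

/-- The identity for a single `G` satisfying the quadratic relation and an arbitrary `T`,
with `U = H T H` for `H` a right inverse of `G`; the exponent is shifted, `k = m + 1`. -/
theorem hecke_inv_pow_mul_inv {R : Type*} [CommRing R] {A : Type*} [Ring A] [Algebra R A]
    (q : R) (G H T U : A) (hGH : G * H = 1)
    (hq : G * G = (q - 1) • G + q • (1 : A)) (hU : U = H * T * H) (m : ℕ) :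
    T ^ (m + 1) * H = q ^ m • (G * U ^ (m + 1))
      + ∑ j ∈ Finset.Icc 1 m, (q ^ (j - 1) * (q - 1)) • (T ^ (m + 1 - j) * U ^ j) := by
  have hTH : T * H = G * U := by
    rw [hU, ← mul_assoc, ← mul_assoc, hGH, one_mul]
  have hG : G = (q - 1) • (1 : A) + q • H := by
    have h := congrArg (· * H) hq
    simpa [add_mul, mul_assoc, hGH] using h
  have hTG : T * G = q • (G * U) + (q - 1) • T := by
    conv_lhs => rw [hG]
    rw [mul_add, mul_smul_comm, mul_smul_comm, mul_one, hTH, add_comm]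
  induction m with
  | zero => simpa using hTH
  | succ m ih =>
    have hlead : T * (G * U ^ (m + 1))
        = q • (G * U ^ (m + 1 + 1)) + (q - 1) • (T * U ^ (m + 1)) := by
      rw [← mul_assoc, hTG, add_mul, smul_mul_assoc, smul_mul_assoc, mul_assoc, ← pow_succ']
    have hsum : T * ∑ j ∈ Finset.Icc 1 m, (q ^ (j - 1) * (q - 1)) • (T ^ (m + 1 - j) * U ^ j)
        = ∑ j ∈ Finset.Icc 1 m, (q ^ (j - 1) * (q - 1)) • (T ^ (m + 1 + 1 - j) * U ^ j) := by
      rw [Finset.mul_sum]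
      refine Finset.sum_congr rfl fun j hj => ?_
      have hj' : m + 1 + 1 - j = (m + 1 - j) + 1 := by
        have := (Finset.mem_Icc.mp hj).2
        omega
      rw [mul_smul_comm, ← mul_assoc, ← pow_succ', hj']
    rw [pow_succ' T (m + 1), mul_assoc, ih, mul_add, hsum, mul_smul_comm, hlead,
      Finset.sum_Icc_succ_top (by omega), smul_add, smul_smul, smul_smul, ← pow_succ,
      Nat.add_sub_cancel, Nat.add_sub_cancel_left, pow_one]
    abel

/-- Lemma 3(ii) of the paper: in `H_{1,n+2}(q)`, for `n ≥ 1` and `k ≥ 1`,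
`t_n^{-k} g_{n+1}^{-1} = q^{k-1} g_{n+1} t_{n+1}^{-k}
  + ∑_{j=1}^{k-1} q^{j-1}(q-1) t_n^{-k+j} t_{n+1}^{-j}`. -/
theorem homflypt_stmt3
    {R : Type*} [CommRing R] {A : Type*} [Ring A] [Algebra R A]
    (q : Rˣ) (t tinv : A) (g ginv : ℕ → A)
    (ht : t * tinv = 1) (ht' : tinv * t = 1)
    (hg : ∀ i, g i * ginv i = 1) (hg' : ∀ i, ginv i * g i = 1)
    (hbt : g 1 * t * g 1 * t = t * g 1 * t * g 1)
    (hct : ∀ i, 2 ≤ i → t * g i = g i * t)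
    (hbr : ∀ i, 1 ≤ i → g i * g (i+1) * g i = g (i+1) * g i * g (i+1))
    (hcm : ∀ i j, 1 ≤ i → i + 2 ≤ j → g i * g j = g j * g i)
    (hq2 : ∀ i, 1 ≤ i → g i * g i = ((q : R) - 1) • g i + (q : R) • (1 : A))
    (tt ttinv : ℕ → A)
    (htt0 : tt 0 = t) (htts : ∀ i, tt (i+1) = g (i+1) * tt i * g (i+1))
    (htti0 : ttinv 0 = tinv)
    (httis : ∀ i, ttinv (i+1) = ginv (i+1) * ttinv i * ginv (i+1))
    (n k : ℕ) (hn : 1 ≤ n) (hk : 1 ≤ k) :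
    ttinv n ^ k * ginv (n+1)
      = ((q : R) ^ (k - 1)) • (g (n+1) * ttinv (n+1) ^ k)
        + ∑ j ∈ Finset.Icc 1 (k - 1),
            ((q : R) ^ (j - 1) * ((q : R) - 1)) • (ttinv n ^ (k - j) * ttinv (n+1) ^ j) := by
  obtain ⟨m, rfl⟩ : ∃ m, k = m + 1 := ⟨k - 1, by omega⟩
  exact hecke_inv_pow_mul_inv (q : R) (g (n+1)) (ginv (n+1)) (ttinv n) (ttinv (n+1))
    (hg _) (hq2 _ (by omega)) (httis n) m
end

section
/- For 0 ≤ i_1 < i_2 < ⋯ < i_n and nonzero integers k_1, …, k_n, one has tr((t'_{i_1})^{k_1} (t'_{i_2})^{k_2} ⋯ (t'_{i_n})^{k_n}) = s_{k_n} ⋯ s_{k_2} s_{k_1}; consequently, for every permutation φ of {1, …, n}, tr((t'_{i_1})^{k_1} ⋯ (t'_{i_n})^{k_n}) = tr((t'_{i_1})^{k_{φ(1)}} ⋯ (t'_{i_n})^{k_{φ(n)}}), i.e. the unknowns s_k of the infinite system commute. -/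
/-!
The element `t'_i` and its inverse only involve `t^{±1}` and `g_1^{±1}, …, g_i^{±1}`, so they lie
in `H_{1,i+1}` (`tp_mem_Hsub`). As the indices strictly increase, the product of all factors but
the last lies in `H_{1,m}`, where `m` is the index of the last factor, and the rule
`tr(a (t'_m)^k) = s_k tr(a)` strips off that factor. Induction on the number of factors gives the
product formula (`trace_prod_eq`). Its right-hand side is a product in a commutative field,
hence invariant under permutation of the exponents.
-/

/-- Integer power of an element `x` with chosen two-sided inverse `xinv`. -/
noncomputable def zp {A : Type*} [Monoid A] (x xinv : A) (m : ℤ) : A :=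
  if 0 ≤ m then x ^ m.toNat else xinv ^ (-m).toNat

/-- The subalgebra of the (inductive limit of the) generalized Iwahori–Hecke algebras of
type B corresponding to `H_{1,n}(q)`: it is generated by `t, t⁻¹` (when `n ≥ 1`) and the
braiding generators `g_i, g_i⁻¹` for `1 ≤ i < n`. -/
def Hsub (F : Type*) {A : Type*} [Field F] [Ring A] [Algebra F A]
    (t tinv : A) (g ginv : ℕ → A) (n : ℕ) : Subalgebra F A :=
  Algebra.adjoin F
    {x | (1 ≤ n ∧ (x = t ∨ x = tinv)) ∨ ∃ i, 1 ≤ i ∧ i < n ∧ (x = g i ∨ x = ginv i)}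

theorem Hsub_mono {F A : Type*} [Field F] [Ring A] [Algebra F A]
    (t tinv : A) (g ginv : ℕ → A) : Monotone (Hsub F t tinv g ginv) := by
  intro m n hmn
  refine Algebra.adjoin_mono ?_
  rintro x (⟨h1, hx⟩ | ⟨i, h1, hi, hx⟩)
  · exact Or.inl ⟨h1.trans hmn, hx⟩
  · exact Or.inr ⟨i, h1, hi.trans_le hmn, hx⟩

/-- Stated for any sequence obtained from `x 0 ∈ {t, t⁻¹}` by successive conjugation, so that it
covers both `t'_i` and its inverse. -/
theorem tp_mem_Hsub {F A : Type*} [Field F] [Ring A] [Algebra F A]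
    (t tinv : A) (g ginv x : ℕ → A) (h0 : x 0 = t ∨ x 0 = tinv)
    (hs : ∀ i, x (i + 1) = g (i + 1) * x i * ginv (i + 1)) (i : ℕ) :
    x i ∈ Hsub F t tinv g ginv (i + 1) := by
  induction i with
  | zero => exact Algebra.subset_adjoin (Or.inl ⟨le_rfl, h0⟩)
  | succ i ih =>
    rw [hs]
    refine mul_mem (mul_mem ?_ (Hsub_mono t tinv g ginv (Nat.le_succ _) ih)) ?_
    · exact Algebra.subset_adjoin (Or.inr ⟨i + 1, by omega, by omega, Or.inl rfl⟩)
    · exact Algebra.subset_adjoin (Or.inr ⟨i + 1, by omega, by omega, Or.inr rfl⟩)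

theorem zp_mem {F A : Type*} [Field F] [Ring A] [Algebra F A] (S : Subalgebra F A)
    {x xinv : A} (hx : x ∈ S) (hxinv : xinv ∈ S) (k : ℤ) : zp x xinv k ∈ S := by
  unfold zp
  split_ifs
  · exact pow_mem hx _
  · exact pow_mem hxinv _

/-- The product formula for the trace; the exponents may vanish here. -/
theorem trace_prod_eq {F A : Type*} [Field F] [Ring A] [Algebra F A]
    (t tinv : A) (g ginv tp tpinv : ℕ → A)
    (htp : ∀ i, tp i ∈ Hsub F t tinv g ginv (i + 1))
    (htpi : ∀ i, tpinv i ∈ Hsub F t tinv g ginv (i + 1))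
    (s : ℤ → F) (tr : A →ₗ[F] F) (htr1 : tr 1 = 1)
    (htrs : ∀ (n : ℕ) (a : A) (k : ℤ), a ∈ Hsub F t tinv g ginv n →
      tr (a * zp (tp n) (tpinv n) k) = s k * tr a)
    (n : ℕ) (idx : Fin n → ℕ) (hidx : StrictMono idx) (kk : Fin n → ℤ) :
    tr ((List.ofFn fun j : Fin n => zp (tp (idx j)) (tpinv (idx j)) (kk j)).prod)
      = ∏ j : Fin n, s (kk j) := by
  induction n with
  | zero => simpa using htr1
  | succ n ih =>
    rw [List.ofFn_succ', List.concat_eq_append, List.prod_append, List.prod_singleton, htrs,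
      ih (fun j => idx j.castSucc) (hidx.comp Fin.strictMono_castSucc) (fun j => kk j.castSucc),
      Fin.prod_univ_castSucc, mul_comm]
    refine list_prod_mem fun y hy => ?_
    obtain ⟨j, rfl⟩ := (List.mem_ofFn' _ _).1 hy
    have hlt : idx j.castSucc + 1 ≤ idx (Fin.last n) := hidx (Fin.castSucc_lt_last j)
    exact zp_mem _ (Hsub_mono t tinv g ginv hlt (htp _)) (Hsub_mono t tinv g ginv hlt (htpi _)) _

/-- Proposition 1 of the paper: for `0 ≤ i_1 < ⋯ < i_n` and nonzero integers
`k_1, …, k_n`, `tr((t'_{i_1})^{k_1} ⋯ (t'_{i_n})^{k_n}) = s_{k_n} ⋯ s_{k_1}`;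
consequently the trace is invariant under permuting the exponents, i.e. the unknowns
`s_k` of the infinite system commute. -/
theorem homflypt_stmt6
    {F : Type*} [Field F] {A : Type*} [Ring A] [Algebra F A]
    (q z : F) (hq0 : q ≠ 0) (hz0 : z ≠ 0)
    (t tinv : A) (g ginv : ℕ → A)
    (ht : t * tinv = 1) (ht' : tinv * t = 1)
    (hg : ∀ i, g i * ginv i = 1) (hg' : ∀ i, ginv i * g i = 1)
    (hbt : g 1 * t * g 1 * t = t * g 1 * t * g 1)
    (hct : ∀ i, 2 ≤ i → t * g i = g i * t)
    (hbr : ∀ i, 1 ≤ i → g i * g (i+1) * g i = g (i+1) * g i * g (i+1))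
    (hcm : ∀ i j, 1 ≤ i → i + 2 ≤ j → g i * g j = g j * g i)
    (hq2 : ∀ i, 1 ≤ i → g i * g i = (q - 1) • g i + q • (1 : A))
    (tt ttinv tp tpinv : ℕ → A)
    (htt0 : tt 0 = t) (htts : ∀ i, tt (i+1) = g (i+1) * tt i * g (i+1))
    (htti0 : ttinv 0 = tinv)
    (httis : ∀ i, ttinv (i+1) = ginv (i+1) * ttinv i * ginv (i+1))
    (htp0 : tp 0 = t) (htps : ∀ i, tp (i+1) = g (i+1) * tp i * ginv (i+1))
    (htpi0 : tpinv 0 = tinv)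
    (htpis : ∀ i, tpinv (i+1) = g (i+1) * tpinv i * ginv (i+1))
    (s : ℤ → F) (tr : A →ₗ[F] F)
    (htr1 : tr 1 = 1)
    (htrc : ∀ a b : A, tr (a * b) = tr (b * a))
    (htrg : ∀ (n : ℕ) (a : A), 1 ≤ n → a ∈ Hsub F t tinv g ginv n →
      tr (a * g n) = z * tr a)
    (htrs : ∀ (n : ℕ) (a : A) (k : ℤ), a ∈ Hsub F t tinv g ginv n →
      tr (a * zp (tp n) (tpinv n) k) = s k * tr a)
    (n : ℕ) (hn : 1 ≤ n) (idx : Fin n → ℕ) (hidx : StrictMono idx)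
    (kk : Fin n → ℤ) (hkk : ∀ j, kk j ≠ 0) :
    tr ((List.ofFn fun j : Fin n => zp (tp (idx j)) (tpinv (idx j)) (kk j)).prod)
        = ∏ j : Fin n, s (kk j)
      ∧ ∀ φ : Equiv.Perm (Fin n),
          tr ((List.ofFn fun j : Fin n => zp (tp (idx j)) (tpinv (idx j)) (kk j)).prod)
            = tr ((List.ofFn fun j : Fin n =>
                zp (tp (idx j)) (tpinv (idx j)) (kk (φ j))).prod) := by
  have key := trace_prod_eq t tinv g ginv tp tpinv
    (tp_mem_Hsub t tinv g ginv tp (Or.inl htp0) htps)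
    (tp_mem_Hsub t tinv g ginv tpinv (Or.inr htpi0) htpis) s tr htr1 htrs n idx hidx
  refine ⟨key kk, fun φ => ?_⟩
  rw [key kk, key fun j => kk (φ j)]
  exact (Equiv.prod_comp φ fun j => s (kk j)).symm
end

section
/- For every p ∈ ℕ, tr(t^p t_1 g_1) = q(q−1) s_1 s_p + ((q−1)^2 z + qz) s_{p+1}. -/
/-- For every `p ∈ ℕ`,
`tr(t^p t_1 g_1) = q(q-1) s_1 s_p + ((q-1)^2 z + qz) s_{p+1}`. -/
theorem homflypt_stmt7
    {F : Type*} [Field F] {A : Type*} [Ring A] [Algebra F A]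
    (q z : F) (hq0 : q ≠ 0) (hz0 : z ≠ 0)
    (t tinv : A) (g ginv : ℕ → A)
    (ht : t * tinv = 1) (ht' : tinv * t = 1)
    (hg : ∀ i, g i * ginv i = 1) (hg' : ∀ i, ginv i * g i = 1)
    (hbt : g 1 * t * g 1 * t = t * g 1 * t * g 1)
    (hct : ∀ i, 2 ≤ i → t * g i = g i * t)
    (hbr : ∀ i, 1 ≤ i → g i * g (i+1) * g i = g (i+1) * g i * g (i+1))
    (hcm : ∀ i j, 1 ≤ i → i + 2 ≤ j → g i * g j = g j * g i)
    (hq2 : ∀ i, 1 ≤ i → g i * g i = (q - 1) • g i + q • (1 : A))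
    (tt ttinv tp tpinv : ℕ → A)
    (htt0 : tt 0 = t) (htts : ∀ i, tt (i+1) = g (i+1) * tt i * g (i+1))
    (htti0 : ttinv 0 = tinv)
    (httis : ∀ i, ttinv (i+1) = ginv (i+1) * ttinv i * ginv (i+1))
    (htp0 : tp 0 = t) (htps : ∀ i, tp (i+1) = g (i+1) * tp i * ginv (i+1))
    (htpi0 : tpinv 0 = tinv)
    (htpis : ∀ i, tpinv (i+1) = g (i+1) * tpinv i * ginv (i+1))
    (s : ℤ → F) (tr : A →ₗ[F] F)
    (htr1 : tr 1 = 1)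
    (htrc : ∀ a b : A, tr (a * b) = tr (b * a))
    (htrg : ∀ (n : ℕ) (a : A), 1 ≤ n → a ∈ Hsub F t tinv g ginv n →
      tr (a * g n) = z * tr a)
    (htrs : ∀ (n : ℕ) (a : A) (k : ℤ), a ∈ Hsub F t tinv g ginv n →
      tr (a * zp (tp n) (tpinv n) k) = s k * tr a)
    (p : ℕ) :
    tr (t ^ p * tt 1 * g 1)
      = q * (q - 1) * s 1 * s (p : ℤ) + ((q - 1) ^ 2 * z + q * z) * s ((p : ℤ) + 1) := by
  -- `g₁ = (q - 1) + q g₁⁻¹`, the quadratic relation multiplied by `g₁⁻¹`.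
  have hG : g 1 = (q - 1) • (1 : A) + q • ginv 1 := by
    have h := congrArg (· * ginv 1) (hq2 1 le_rfl)
    simpa [mul_assoc, add_mul, hg] using h
  have htt : tt 1 = g 1 * t * g 1 := by rw [htts 0, htt0]
  have htp : tp 1 = g 1 * t * ginv 1 := by rw [htps 0, htp0]
  have hmem : ∀ k : ℕ, t ^ k ∈ Hsub F t tinv g ginv 1 := by
    intro k
    have h : t ∈ Hsub F t tinv g ginv 1 :=
      Algebra.subset_adjoin (Or.inl ⟨le_rfl, Or.inl rfl⟩)
    exact pow_mem h k
  have hs : ∀ k : ℕ, tr (t ^ k) = s (k : ℤ) := by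
    intro k
    have h := htrs 0 1 (k : ℤ) (one_mem _)
    simpa [zp, htp0, htr1] using h
  have h1 : tr (t ^ p * (g 1 * t)) = z * s ((p : ℤ) + 1) := by
    have h := htrg 1 (t ^ (p + 1)) le_rfl (hmem _)
    rw [hs] at h
    rw [← mul_assoc, htrc, ← mul_assoc, ← pow_succ', h]
    push_cast
    rfl
  have h2 : tr (t ^ p * tp 1) = s 1 * s (p : ℤ) := by
    have h := htrs 1 (t ^ p) 1 (hmem p)
    rw [hs] at h
    simpa [zp] using h
  have hA : g 1 * t * g 1 = (q - 1) • (g 1 * t) + q • tp 1 := by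
    have h := congrArg (fun x => g 1 * t * x) hG
    simpa only [mul_add, mul_smul_comm, mul_one, ← htp] using h
  have hB : tt 1 * g 1 = (q - 1) • (g 1 * t * g 1) + q • (g 1 * t) := by
    rw [htt, mul_assoc (g 1 * t), hq2 1 le_rfl, mul_add, mul_smul_comm, mul_smul_comm, mul_one]
  rw [mul_assoc, hB, hA]
  simp only [mul_add, smul_add, mul_smul_comm, map_add, map_smul, h1, h2, smul_eq_mul]
  ring
end

section
/- For every p ∈ ℕ, tr(t^p t_1^{−1} g_1^{−1}) = q^{−1}(q^{−1}−1) s_{−1} s_p + (q^{−1}(q^{−1}−1)^2 z + (q^{−1}−1)^3 + q^{−1}(q^{−1}−1) + q^{−2} z) s_{p−1}. -/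
/-- For every `p ∈ ℕ`, `tr(t^p t_1^{-1} g_1^{-1}) = q^{-1}(q^{-1}-1) s_{-1} s_p
+ (q^{-1}(q^{-1}-1)^2 z + (q^{-1}-1)^3 + q^{-1}(q^{-1}-1) + q^{-2} z) s_{p-1}`. -/
theorem homflypt_stmt8
    {F : Type*} [Field F] {A : Type*} [Ring A] [Algebra F A]
    (q z : F) (hq0 : q ≠ 0) (hz0 : z ≠ 0)
    (t tinv : A) (g ginv : ℕ → A)
    (ht : t * tinv = 1) (ht' : tinv * t = 1)
    (hg : ∀ i, g i * ginv i = 1) (hg' : ∀ i, ginv i * g i = 1)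
    (hbt : g 1 * t * g 1 * t = t * g 1 * t * g 1)
    (hct : ∀ i, 2 ≤ i → t * g i = g i * t)
    (hbr : ∀ i, 1 ≤ i → g i * g (i+1) * g i = g (i+1) * g i * g (i+1))
    (hcm : ∀ i j, 1 ≤ i → i + 2 ≤ j → g i * g j = g j * g i)
    (hq2 : ∀ i, 1 ≤ i → g i * g i = (q - 1) • g i + q • (1 : A))
    (tt ttinv tp tpinv : ℕ → A)
    (htt0 : tt 0 = t) (htts : ∀ i, tt (i+1) = g (i+1) * tt i * g (i+1))
    (htti0 : ttinv 0 = tinv)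
    (httis : ∀ i, ttinv (i+1) = ginv (i+1) * ttinv i * ginv (i+1))
    (htp0 : tp 0 = t) (htps : ∀ i, tp (i+1) = g (i+1) * tp i * ginv (i+1))
    (htpi0 : tpinv 0 = tinv)
    (htpis : ∀ i, tpinv (i+1) = g (i+1) * tpinv i * ginv (i+1))
    (s : ℤ → F) (tr : A →ₗ[F] F)
    (htr1 : tr 1 = 1)
    (htrc : ∀ a b : A, tr (a * b) = tr (b * a))
    (htrg : ∀ (n : ℕ) (a : A), 1 ≤ n → a ∈ Hsub F t tinv g ginv n →
      tr (a * g n) = z * tr a)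
    (htrs : ∀ (n : ℕ) (a : A) (k : ℤ), a ∈ Hsub F t tinv g ginv n →
      tr (a * zp (tp n) (tpinv n) k) = s k * tr a)
    (p : ℕ) :
    tr (t ^ p * ttinv 1 * ginv 1)
      = q⁻¹ * (q⁻¹ - 1) * s (-1) * s (p : ℤ)
        + (q⁻¹ * (q⁻¹ - 1) ^ 2 * z + (q⁻¹ - 1) ^ 3 + q⁻¹ * (q⁻¹ - 1) + q⁻¹ ^ 2 * z)
            * s ((p : ℤ) - 1) := by
  have hginv : ginv 1 = q⁻¹ • g 1 + (q⁻¹ - 1) • (1 : A) := by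
    have h1 : g 1 = (q - 1) • (1 : A) + q • ginv 1 := by
      have h2 := congrArg (· * ginv 1) (hq2 1 le_rfl)
      simpa [mul_assoc, add_mul, hg] using h2
    have h3 : q⁻¹ • g 1 = (q⁻¹ * (q - 1)) • (1 : A) + ginv 1 := by
      conv_lhs => rw [h1]
      rw [smul_add, smul_smul, smul_smul, inv_mul_cancel₀ hq0, one_smul]
    have h4 : q⁻¹ * (q - 1) = -(q⁻¹ - 1) := by
      field_simp
      ring
    rw [h3, h4]
    module
  have hsq : ginv 1 * ginv 1 = (q⁻¹ - 1) • ginv 1 + q⁻¹ • (1 : A) := by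
    conv_lhs => enter [1]; rw [hginv]
    rw [add_mul, smul_mul_assoc, smul_mul_assoc, hg, one_mul, add_comm]
  have hmt : t ∈ Hsub F t tinv g ginv 1 :=
    Algebra.subset_adjoin (Or.inl ⟨le_rfl, Or.inl rfl⟩)
  have hmT : tinv ∈ Hsub F t tinv g ginv 1 :=
    Algebra.subset_adjoin (Or.inl ⟨le_rfl, Or.inr rfl⟩)
  have hmp : t ^ p ∈ Hsub F t tinv g ginv 1 := pow_mem hmt p
  have hs0 : ∀ k : ℤ, tr (zp t tinv k) = s k := by
    intro k
    have h := htrs 0 1 k (one_mem _)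
    rwa [htp0, htpi0, one_mul, htr1, mul_one] at h
  have htp : tr (t ^ p) = s p := by
    simpa [zp] using hs0 p
  -- For `p = 0` the word is `t⁻¹`, so `zp` takes its negative branch.
  have htpT : tr (t ^ p * tinv) = s ((p : ℤ) - 1) := by
    rcases p with _ | n
    · simpa [zp] using hs0 (-1)
    · have h := hs0 n
      simp only [zp, Int.natCast_nonneg, if_true, Int.toNat_natCast] at h
      rw [pow_succ, mul_assoc, ht, mul_one, h]
      congr 1
      push_cast
      ring
  have hth : ∀ a ∈ Hsub F t tinv g ginv 1,
      tr (a * ginv 1) = (q⁻¹ * z + (q⁻¹ - 1)) * tr a := by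
    intro a ha
    rw [hginv, mul_add, mul_smul_comm, mul_smul_comm, mul_one, map_add, map_smul, map_smul,
      htrg 1 a le_rfl ha, smul_eq_mul, smul_eq_mul]
    ring
  have hX : tr (t ^ p * ginv 1 * tinv) = (q⁻¹ * z + (q⁻¹ - 1)) * s ((p : ℤ) - 1) := by
    rw [htrc, ← mul_assoc, hth _ (mul_mem hmT hmp), htrc tinv, htpT]
  have hloop : tr (t ^ p * (g 1 * tinv * ginv 1)) = s (-1) * s p := by
    have h := htrs 1 (t ^ p) (-1) hmp
    have h1 := htpis 0
    rw [htpi0, zero_add] at h1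
    rw [htp] at h
    simpa [zp, h1] using h
  have hY : tr (t ^ p * ginv 1 * tinv * ginv 1)
      = q⁻¹ * (s (-1) * s p)
        + (q⁻¹ - 1) * ((q⁻¹ * z + (q⁻¹ - 1)) * s ((p : ℤ) - 1)) := by
    have h : t ^ p * ginv 1 * tinv * ginv 1
        = q⁻¹ • (t ^ p * (g 1 * tinv * ginv 1)) + (q⁻¹ - 1) • (t ^ p * tinv * ginv 1) := by
      conv_lhs => enter [1, 1, 2]; rw [hginv]
      simp only [mul_add, add_mul, mul_smul_comm, smul_mul_assoc, mul_one, mul_assoc]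
    rw [h, map_add, map_smul, map_smul, hloop, hth _ (mul_mem hmp hmT), htpT, smul_eq_mul,
      smul_eq_mul]
  have hword : t ^ p * ttinv 1 * ginv 1
      = (q⁻¹ - 1) • (t ^ p * ginv 1 * tinv * ginv 1) + q⁻¹ • (t ^ p * ginv 1 * tinv) := by
    have h1 := httis 0
    rw [htti0, zero_add] at h1
    have h2 : t ^ p * ttinv 1 * ginv 1 = t ^ p * ginv 1 * tinv * (ginv 1 * ginv 1) := by
      rw [h1]
      simp only [mul_assoc]
    rw [h2, hsq, mul_add, mul_smul_comm, mul_smul_comm, mul_one]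
  rw [hword, map_add, map_smul, map_smul, hX, hY, smul_eq_mul, smul_eq_mul]
  ring
end

section
/- For every p ∈ ℕ and every integer k ≥ 1, tr(t^p t_1^k g_1) = (q−1) Σ_{j=0}^{k−1} q^j tr(t^{p+j} t_1^{k−j}) + q^k z s_{p+k}. -/
/-- For every `p ∈ ℕ` and `k ≥ 1`,
`tr(t^p t_1^k g_1) = (q-1) ∑_{j=0}^{k-1} q^j tr(t^{p+j} t_1^{k-j}) + q^k z s_{p+k}`. -/
theorem homflypt_stmt9
    {F : Type*} [Field F] {A : Type*} [Ring A] [Algebra F A]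
    (q z : F) (hq0 : q ≠ 0) (hz0 : z ≠ 0)
    (t tinv : A) (g ginv : ℕ → A)
    (ht : t * tinv = 1) (ht' : tinv * t = 1)
    (hg : ∀ i, g i * ginv i = 1) (hg' : ∀ i, ginv i * g i = 1)
    (hbt : g 1 * t * g 1 * t = t * g 1 * t * g 1)
    (hct : ∀ i, 2 ≤ i → t * g i = g i * t)
    (hbr : ∀ i, 1 ≤ i → g i * g (i+1) * g i = g (i+1) * g i * g (i+1))
    (hcm : ∀ i j, 1 ≤ i → i + 2 ≤ j → g i * g j = g j * g i)
    (hq2 : ∀ i, 1 ≤ i → g i * g i = (q - 1) • g i + q • (1 : A))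
    (tt ttinv tp tpinv : ℕ → A)
    (htt0 : tt 0 = t) (htts : ∀ i, tt (i+1) = g (i+1) * tt i * g (i+1))
    (htti0 : ttinv 0 = tinv)
    (httis : ∀ i, ttinv (i+1) = ginv (i+1) * ttinv i * ginv (i+1))
    (htp0 : tp 0 = t) (htps : ∀ i, tp (i+1) = g (i+1) * tp i * ginv (i+1))
    (htpi0 : tpinv 0 = tinv)
    (htpis : ∀ i, tpinv (i+1) = g (i+1) * tpinv i * ginv (i+1))
    (s : ℤ → F) (tr : A →ₗ[F] F)
    (htr1 : tr 1 = 1)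
    (htrc : ∀ a b : A, tr (a * b) = tr (b * a))
    (htrg : ∀ (n : ℕ) (a : A), 1 ≤ n → a ∈ Hsub F t tinv g ginv n →
      tr (a * g n) = z * tr a)
    (htrs : ∀ (n : ℕ) (a : A) (k : ℤ), a ∈ Hsub F t tinv g ginv n →
      tr (a * zp (tp n) (tpinv n) k) = s k * tr a)
    (p k : ℕ) (hk : 1 ≤ k) :
    tr (t ^ p * tt 1 ^ k * g 1)
      = (q - 1) * ∑ j ∈ Finset.range k, q ^ j * tr (t ^ (p + j) * tt 1 ^ (k - j))
        + q ^ k * z * s ((p : ℤ) + (k : ℤ)) := by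
  have hT : tt 1 = g 1 * t * g 1 := by simpa [htt0] using htts 0
  have hTg : tt 1 * g 1 = (q - 1) • tt 1 + q • (g 1 * t) := by
    rw [hT, mul_assoc (g 1 * t), hq2 1 le_rfl, mul_add, mul_smul_comm, mul_smul_comm, mul_one]
  have hs : ∀ p : ℕ, tr (t ^ p) = s p := fun p => by
    simpa [zp, htp0, htr1] using htrs 0 1 p (one_mem _)
  have htmem : t ∈ Hsub F t tinv g ginv 1 :=
    Algebra.subset_adjoin (Or.inl ⟨le_rfl, Or.inl rfl⟩)
  have hrec : ∀ p k : ℕ, tr (t ^ p * tt 1 ^ (k + 1) * g 1)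
      = (q - 1) * tr (t ^ p * tt 1 ^ (k + 1)) + q * tr (t ^ (p + 1) * tt 1 ^ k * g 1) := by
    intro p k
    have h1 : t ^ p * tt 1 ^ (k + 1) * g 1
        = (q - 1) • (t ^ p * tt 1 ^ (k + 1)) + q • ((t ^ p * tt 1 ^ k * g 1) * t) := by
      calc t ^ p * tt 1 ^ (k + 1) * g 1 = t ^ p * tt 1 ^ k * (tt 1 * g 1) := by
            simp only [pow_succ, mul_assoc]
        _ = _ := by
            rw [hTg, mul_add, mul_smul_comm, mul_smul_comm]
            simp only [pow_succ, mul_assoc]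
    rw [h1, map_add, map_smul, map_smul, smul_eq_mul, smul_eq_mul, htrc _ t]
    simp only [pow_succ', mul_assoc]
  clear hk
  induction k generalizing p with
  | zero => simp [htrg 1 _ le_rfl (pow_mem htmem p), hs]
  | succ k ih =>
    rw [hrec, ih, Finset.sum_range_succ']
    -- Reindexing `j ↦ j + 1` matches the sum for `(p + 1, k)` with the terms `j ≥ 1` for `(p, k + 1)`.
    have hsum : ∑ j ∈ Finset.range k,
          q ^ (j + 1) * tr (t ^ (p + (j + 1)) * tt 1 ^ (k + 1 - (j + 1)))
        = q * ∑ j ∈ Finset.range k, q ^ j * tr (t ^ (p + 1 + j) * tt 1 ^ (k - j)) := by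
      rw [Finset.mul_sum]
      refine Finset.sum_congr rfl fun j _ => ?_
      rw [Nat.add_sub_add_right, show p + (j + 1) = p + 1 + j by omega, pow_succ' q,
        mul_assoc]
    have hidx : ((p + 1 : ℕ) : ℤ) + (k : ℤ) = (p : ℤ) + ((k + 1 : ℕ) : ℤ) := by
      push_cast; ring
    rw [hsum, hidx, Nat.sub_zero, Nat.add_zero]
    generalize ∑ j ∈ Finset.range k, q ^ j * tr (t ^ (p + 1 + j) * tt 1 ^ (k - j)) = S
    ring_nf
end

section
/- For every p ∈ ℕ and every integer k ≥ 1, tr(t^p t_1^{−k} g_1^{−1}) = (q^{−1}−1) Σ_{j=−k+1}^{0} q^j tr(t^{p+j} t_1^{−k−j}) + (q^{−k−1} z + q^{−k}(q^{−1}−1)) s_{p−k}, where the j = 0 summand is understood as tr(t^p t_1^{−k}). -/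
/-- `zp` is the integer power in the group of units. -/
lemma zp_eq_zpow {A : Type*} [Monoid A] (v : Aˣ) (m : ℤ) :
    zp (v : A) ((v⁻¹ : Aˣ) : A) m = ((v ^ m : Aˣ) : A) := by
  unfold zp
  split_ifs with hm
  · rw [← Units.val_pow_eq_pow_val, ← zpow_natCast, Int.toNat_of_nonneg hm]
  · rw [← Units.val_pow_eq_pow_val, ← zpow_natCast, Int.toNat_of_nonneg (by omega), inv_zpow',
      neg_neg]

lemma pow_mul_pow_eq_zp {A : Type*} [Monoid A] (t u : A) (h1 : t * u = 1) (h2 : u * t = 1)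
    (i p : ℕ) : u ^ i * t ^ p = zp t u ((p : ℤ) - i) := by
  have e := zp_eq_zpow (⟨t, u, h1, h2⟩ : Aˣ) ((p : ℤ) - i)
  rw [sub_eq_neg_add, zpow_add, zpow_neg, zpow_natCast, zpow_natCast, ← inv_pow] at e
  rw [sub_eq_neg_add]
  exact e.symm

/-- Iteration of the exchange rule `U h = a h u + b U`. -/
lemma pow_mul_of_step {F A : Type*} [Field F] [Ring A] [Algebra F A] (a b : F) (U h u : A)
    (step : U * h = a • (h * u) + b • U) (k : ℕ) :
    U ^ k * h = a ^ k • (h * u ^ k)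
      + b • ∑ i ∈ Finset.range k, a ^ i • (U ^ (k - i) * u ^ i) := by
  induction k with
  | zero => simp
  | succ k ih =>
    have e : U ^ (k + 1) * h = a • ((U ^ k * h) * u) + b • U ^ (k + 1) := by
      rw [pow_succ, mul_assoc, step, mul_add, mul_smul_comm, mul_smul_comm, mul_assoc]
    rw [e, ih, Finset.sum_range_succ', add_mul, smul_mul_assoc, smul_mul_assoc, Finset.sum_mul,
      smul_add, smul_add, smul_smul, smul_comm a b, Finset.smul_sum (r := a), mul_assoc, ← pow_succ,
      ← pow_succ']
    simp only [smul_mul_assoc, smul_smul, mul_assoc, ← pow_succ, ← pow_succ', Nat.add_sub_add_right,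
      pow_zero, one_smul, Nat.sub_zero, mul_one, add_assoc]

/-- For every `p ∈ ℕ` and `k ≥ 1`, `tr(t^p t_1^{-k} g_1^{-1})
= (q^{-1}-1) ∑_{j=-k+1}^{0} q^j tr(t^{p+j} t_1^{-k-j})
  + (q^{-k-1} z + q^{-k}(q^{-1}-1)) s_{p-k}`. -/
theorem homflypt_stmt10
    {F : Type*} [Field F] {A : Type*} [Ring A] [Algebra F A]
    (q z : F) (hq0 : q ≠ 0) (hz0 : z ≠ 0)
    (t tinv : A) (g ginv : ℕ → A)
    (ht : t * tinv = 1) (ht' : tinv * t = 1)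
    (hg : ∀ i, g i * ginv i = 1) (hg' : ∀ i, ginv i * g i = 1)
    (hbt : g 1 * t * g 1 * t = t * g 1 * t * g 1)
    (hct : ∀ i, 2 ≤ i → t * g i = g i * t)
    (hbr : ∀ i, 1 ≤ i → g i * g (i+1) * g i = g (i+1) * g i * g (i+1))
    (hcm : ∀ i j, 1 ≤ i → i + 2 ≤ j → g i * g j = g j * g i)
    (hq2 : ∀ i, 1 ≤ i → g i * g i = (q - 1) • g i + q • (1 : A))
    (tt ttinv tp tpinv : ℕ → A)
    (htt0 : tt 0 = t) (htts : ∀ i, tt (i+1) = g (i+1) * tt i * g (i+1))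
    (htti0 : ttinv 0 = tinv)
    (httis : ∀ i, ttinv (i+1) = ginv (i+1) * ttinv i * ginv (i+1))
    (htp0 : tp 0 = t) (htps : ∀ i, tp (i+1) = g (i+1) * tp i * ginv (i+1))
    (htpi0 : tpinv 0 = tinv)
    (htpis : ∀ i, tpinv (i+1) = g (i+1) * tpinv i * ginv (i+1))
    (s : ℤ → F) (tr : A →ₗ[F] F)
    (htr1 : tr 1 = 1)
    (htrc : ∀ a b : A, tr (a * b) = tr (b * a))
    (htrg : ∀ (n : ℕ) (a : A), 1 ≤ n → a ∈ Hsub F t tinv g ginv n →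
      tr (a * g n) = z * tr a)
    (htrs : ∀ (n : ℕ) (a : A) (k : ℤ), a ∈ Hsub F t tinv g ginv n →
      tr (a * zp (tp n) (tpinv n) k) = s k * tr a)
    (p k : ℕ) (hk : 1 ≤ k) :
    tr (t ^ p * ttinv 1 ^ k * ginv 1)
      = (q⁻¹ - 1) * ∑ j ∈ Finset.Icc (-(k : ℤ) + 1) 0,
            q ^ j * tr (zp t tinv ((p : ℤ) + j) * zp (tt 1) (ttinv 1) (-(k : ℤ) - j))
        + (q ^ (-(k : ℤ) - 1) * z + q ^ (-(k : ℤ)) * (q⁻¹ - 1)) * s ((p : ℤ) - (k : ℤ)) := by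
  have h_inv : ginv 1 = q⁻¹ • g 1 + (q⁻¹ - 1) • (1 : A) := by
    have e := congrArg (fun x => q⁻¹ • (x * ginv 1)) (hq2 1 le_rfl)
    simp only [mul_assoc, add_mul, smul_mul_assoc, hg, mul_one, one_mul, smul_add, smul_smul,
      inv_mul_cancel₀ hq0, one_smul] at e
    rw [e, mul_sub, inv_mul_cancel₀ hq0]
    module
  have h_sq : ginv 1 * ginv 1 = q⁻¹ • (1 : A) + (q⁻¹ - 1) • ginv 1 := by
    nth_rewrite 1 [h_inv]
    rw [add_mul, smul_mul_assoc, smul_mul_assoc, hg, one_mul]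
  have hU : ttinv 1 = ginv 1 * tinv * ginv 1 := by
    simpa [htti0] using httis 0
  have step : ttinv 1 * ginv 1 = q⁻¹ • (ginv 1 * tinv) + (q⁻¹ - 1) • ttinv 1 := by
    rw [hU, mul_assoc, h_sq, mul_add, mul_smul_comm, mul_smul_comm, mul_one]
  have tr_zp (m : ℤ) : tr (zp t tinv m) = s m := by
    have e := htrs 0 1 m (one_mem _)
    rwa [one_mul, htr1, mul_one, htp0, htpi0] at e
  have zp_mem (m : ℤ) : zp t tinv m ∈ Hsub F t tinv g ginv 1 := by
    unfold zp
    split_ifs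
    · refine pow_mem (Algebra.subset_adjoin ?_) _
      exact Or.inl ⟨le_rfl, Or.inl rfl⟩
    · refine pow_mem (Algebra.subset_adjoin ?_) _
      exact Or.inl ⟨le_rfl, Or.inr rfl⟩
  have tr_head : tr (t ^ p * (ginv 1 * tinv ^ k)) = (q⁻¹ * z + (q⁻¹ - 1)) * s ((p : ℤ) - k) := by
    rw [← mul_assoc, htrc, ← mul_assoc, pow_mul_pow_eq_zp t tinv ht ht', h_inv, mul_add,
      mul_smul_comm, mul_smul_comm, mul_one, map_add, map_smul, map_smul,
      htrg 1 _ le_rfl (zp_mem _), tr_zp, smul_eq_mul, smul_eq_mul]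
    ring
  have tr_term (i : ℕ) : tr (t ^ p * (ttinv 1 ^ (k - i) * tinv ^ i))
      = tr (zp t tinv ((p : ℤ) - i) * ttinv 1 ^ (k - i)) := by
    rw [← mul_assoc, htrc, ← mul_assoc, pow_mul_pow_eq_zp t tinv ht ht']
  have h_sum : ∑ j ∈ Finset.Icc (-(k : ℤ) + 1) 0,
        q ^ j * tr (zp t tinv ((p : ℤ) + j) * zp (tt 1) (ttinv 1) (-(k : ℤ) - j))
      = ∑ i ∈ Finset.range k,
        q⁻¹ ^ i * tr (zp t tinv ((p : ℤ) - i) * ttinv 1 ^ (k - i)) := by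
    symm
    refine Finset.sum_bij (fun (i : ℕ) _ => -(i : ℤ)) ?_ ?_ ?_ ?_
    · intro i hi
      simp only [Finset.mem_range] at hi
      simp only [Finset.mem_Icc]
      omega
    · intro i _ j _ hij
      simpa using hij
    · intro j hj
      simp only [Finset.mem_Icc] at hj
      exact ⟨(-j).toNat, by simp only [Finset.mem_range]; omega, by omega⟩
    · intro i hi
      simp only [Finset.mem_range] at hi
      have e : zp (tt 1) (ttinv 1) (-(k : ℤ) - -(i : ℤ)) = ttinv 1 ^ (k - i) := by
        rw [zp, if_neg (by omega)]
        congr 1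
        omega
      rw [e, zpow_neg, zpow_natCast, inv_pow, ← sub_eq_add_neg]
  rw [h_sum, mul_assoc, pow_mul_of_step _ _ _ _ _ step, mul_add, mul_smul_comm, mul_smul_comm,
    Finset.mul_sum, map_add, map_smul, map_smul, map_sum, tr_head]
  simp only [mul_smul_comm, map_smul, smul_eq_mul, tr_term]
  rw [zpow_sub₀ hq0, zpow_neg, zpow_natCast, zpow_one, inv_pow]
  ring
end

section
/- For every k ∈ ℕ and every τ = t^{k_0} t_1^{k_1} ⋯ t_n^{k_n} ∈ Λ^{aug+}_{(k)} (all k_i > 0, Σ k_i = k), one has tr(τ) = I(tr(f(τ))), where f(τ) = t^{−k_0} t_1^{−k_1} ⋯ t_n^{−k_n} ∈ Λ^{aug−}_{(−k)}. -/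
namespace HeckeB

/-- The defining relations of the type-B Hecke algebra tower with parameter `q`, together with
chosen inverses `gi i` of the braiding generators. Invertibility of `t` is not required. -/
structure Rel {K B : Type*} [Field K] [Ring B] [Algebra K B]
    (q : K) (t : B) (g gi : ℕ → B) : Prop where
  q0 : q ≠ 0
  hg : ∀ i, g i * gi i = 1
  hg' : ∀ i, gi i * g i = 1
  hbt : g 1 * t * g 1 * t = t * g 1 * t * g 1
  hct : ∀ i, 2 ≤ i → t * g i = g i * t
  hbr : ∀ i, 1 ≤ i → g i * g (i+1) * g i = g (i+1) * g i * g (i+1)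
  hcm : ∀ i j, 1 ≤ i → i + 2 ≤ j → g i * g j = g j * g i
  hq2 : ∀ i, 1 ≤ i → g i * g i = (q - 1) • g i + q • (1 : B)

/-- The looping elements `t_n = g_n ⋯ g_1 t g_1 ⋯ g_n`. -/
def jm {B : Type*} [Ring B] (t : B) (g : ℕ → B) : ℕ → B
  | 0 => t
  | n + 1 => g (n+1) * jm t g n * g (n+1)

/-- The looping elements `t'_n = g_n ⋯ g_1 t g_1⁻¹ ⋯ g_n⁻¹`. -/
def lp {B : Type*} [Ring B] (t : B) (g gi : ℕ → B) : ℕ → B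
  | 0 => t
  | n + 1 => g (n+1) * lp t g gi n * gi (n+1)

/-- The positive part of `H_{1,n}`: the subalgebra generated by `t` (when `n ≥ 1`) and
`g_1, …, g_{n-1}`, without `t⁻¹`. -/
def Pos (K : Type*) {B : Type*} [Field K] [Ring B] [Algebra K B]
    (t : B) (g : ℕ → B) (n : ℕ) : Subalgebra K B :=
  Algebra.adjoin K {x | (1 ≤ n ∧ x = t) ∨ ∃ i, 1 ≤ i ∧ i < n ∧ x = g i}

/-- The span of the elements `a g_n b` (when `n ≥ 1`) and `a t_n^k`, with `a, b` in the positive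
part of level `n`. -/
def V (K : Type*) {B : Type*} [Field K] [Ring B] [Algebra K B]
    (t : B) (g : ℕ → B) (n : ℕ) : Submodule K B :=
  Submodule.span K
    ({x | 1 ≤ n ∧ ∃ a ∈ Pos K t g n, ∃ b ∈ Pos K t g n, x = a * g n * b} ∪
      {x | ∃ a ∈ Pos K t g n, ∃ k : ℕ, x = a * jm t g n ^ k})

/-- The span of the elements `a g_n b` (when `n ≥ 1`) and `a t'_n^k b`, with `a, b` in the
positive part of level `n`. -/
def W (K : Type*) {B : Type*} [Field K] [Ring B] [Algebra K B]
    (t : B) (g gi : ℕ → B) (n : ℕ) : Submodule K B :=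
  Submodule.span K
    ({x | 1 ≤ n ∧ ∃ a ∈ Pos K t g n, ∃ b ∈ Pos K t g n, x = a * g n * b} ∪
      {x | ∃ a ∈ Pos K t g n, ∃ b ∈ Pos K t g n, ∃ k : ℕ, x = a * lp t g gi n ^ k * b})

section
variable {K B : Type*} [Field K] [Ring B] [Algebra K B] {q : K} {t : B} {g gi : ℕ → B}

/-! ### The positive part and its looping elements -/

theorem t_mem {n : ℕ} (h : 1 ≤ n) : t ∈ Pos K t g n :=
  Algebra.subset_adjoin (Or.inl ⟨h, rfl⟩)

theorem g_mem {n i : ℕ} (h : 1 ≤ i) (h' : i < n) : g i ∈ Pos K t g n :=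
  Algebra.subset_adjoin (Or.inr ⟨i, h, h', rfl⟩)

theorem Pos_mono {m n : ℕ} (h : m ≤ n) : Pos K t g m ≤ Pos K t g n := by
  apply Algebra.adjoin_mono
  rintro x (⟨h1, rfl⟩ | ⟨i, h1, h2, rfl⟩)
  · exact Or.inl ⟨by omega, rfl⟩
  · exact Or.inr ⟨i, h1, by omega, rfl⟩

theorem Rel.gi_eq (H : Rel q t g gi) {i : ℕ} (hi : 1 ≤ i) :
    gi i = q⁻¹ • g i + (q⁻¹ - 1) • (1 : B) := by
  have h := congrArg (fun x => q⁻¹ • (gi i * x)) (H.hq2 i hi)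
  have hq := H.q0
  simp only [mul_add, mul_smul_comm, ← mul_assoc, H.hg', one_mul, mul_one, smul_add, smul_smul,
    inv_mul_cancel₀ hq, one_smul] at h
  rw [h, mul_sub, inv_mul_cancel₀ hq, mul_one]
  module

theorem Rel.gi_mem (H : Rel q t g gi) {n i : ℕ} (h : 1 ≤ i) (h' : i < n) :
    gi i ∈ Pos K t g n := by
  rw [H.gi_eq h]
  exact add_mem (Subalgebra.smul_mem _ (g_mem h h') _) (Subalgebra.smul_mem _ (one_mem _) _)

theorem jm_mem (n : ℕ) : jm t g n ∈ Pos K t g (n+1) := by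
  induction n with
  | zero => exact t_mem le_rfl
  | succ n ih =>
    exact mul_mem (mul_mem (g_mem (by omega) (by omega)) (Pos_mono (by omega) ih))
      (g_mem (by omega) (by omega))

/-- To commute with the positive part it suffices to commute with its generators. -/
theorem comm_of_gens {n : ℕ} {y : B} (h1 : 1 ≤ n → y * t = t * y)
    (h2 : ∀ i, 1 ≤ i → i < n → y * g i = g i * y) {x : B} (hx : x ∈ Pos K t g n) :
    y * x = x * y := by
  induction hx using Algebra.adjoin_induction with
  | mem x hx =>
    obtain ⟨h, rfl⟩ | ⟨i, hi, hi', rfl⟩ := hx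
    · exact h1 h
    · exact h2 i hi hi'
  | algebraMap r => exact (Algebra.commutes r y).symm
  | add a b _ _ ha hb => rw [mul_add, add_mul, ha, hb]
  | mul a b _ _ ha hb => rw [← mul_assoc, ha, mul_assoc, hb, mul_assoc]

theorem Rel.g_comm (H : Rel q t g gi) {n j : ℕ} (hj : n < j) {x : B} (hx : x ∈ Pos K t g n) :
    g j * x = x * g j :=
  comm_of_gens (fun h => (H.hct j (by omega)).symm)
    (fun i h h' => (H.hcm i j h (by omega)).symm) hx

theorem Rel.gi_comm (H : Rel q t g gi) {n j : ℕ} (hj : n < j) {x : B} (hx : x ∈ Pos K t g n) :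
    gi j * x = x * gi j := by
  rw [H.gi_eq (by omega), add_mul, mul_add, smul_mul_assoc, mul_smul_comm, H.g_comm hj hx]
  simp

theorem Rel.t_comm_jm (H : Rel q t g gi) (n : ℕ) : jm t g n * t = t * jm t g n := by
  induction n with
  | zero => rfl
  | succ n ih =>
    rcases Nat.eq_zero_or_pos n with rfl | hn
    · simpa [jm, mul_assoc] using H.hbt
    · have := H.hct (n+1) (by omega)
      simp only [jm]
      rw [mul_assoc, ← this, ← mul_assoc _ t, mul_assoc _ _ t, ih, ← mul_assoc _ t, ← this]
      simp only [mul_assoc]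

theorem Rel.g_comm_jm (H : Rel q t g gi) (n i : ℕ) (hi : 1 ≤ i) (hin : i < n) :
    jm t g n * g i = g i * jm t g n := by
  induction n with
  | zero => omega
  | succ n ih =>
    rcases Nat.lt_or_ge i n with h | h
    · have hc := H.hcm i (n+1) hi (by omega)
      have := ih h
      simp only [jm]
      rw [mul_assoc, ← hc, ← mul_assoc _ (g i), mul_assoc _ _ (g i), this, ← mul_assoc _ (g i),
        ← hc]
      simp only [mul_assoc]
    · obtain ⟨m, rfl⟩ : ∃ m, n = m + 1 := ⟨n - 1, by omega⟩
      obtain rfl : i = m + 1 := by omega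
      have hb := H.hbr (m+1) hi
      have hc := H.g_comm (j := m+1+1) (by omega) (jm_mem (K := K) (t := t) (g := g) m)
      simp only [jm]
      calc _ = g (m+1+1) * g (m+1) * jm t g m * (g (m+1) * g (m+1+1) * g (m+1)) := by
            simp only [mul_assoc]
        _ = g (m+1+1) * g (m+1) * (g (m+1+1) * jm t g m) * g (m+1) * g (m+1+1) := by
            rw [hb, hc]; simp only [mul_assoc]
        _ = (g (m+1+1) * g (m+1) * g (m+1+1)) * jm t g m * g (m+1) * g (m+1+1) := by
            simp only [mul_assoc]
        _ = _ := by rw [← hb]; simp only [mul_assoc]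

theorem Rel.jm_comm (H : Rel q t g gi) (n k : ℕ) {x : B} (hx : x ∈ Pos K t g n) :
    jm t g n ^ k * x = x * jm t g n ^ k := by
  have h : Commute (jm t g n) x :=
    comm_of_gens (fun _ => H.t_comm_jm n) (fun i h h' => H.g_comm_jm n i h h') hx
  exact h.pow_left k

/-- A left ideal criterion for containing the positive part. -/
theorem Pos_le_of_mul {n : ℕ} {M : Submodule K B} (h1 : (1 : B) ∈ M)
    (ht : 1 ≤ n → ∀ v ∈ M, t * v ∈ M)
    (hg : ∀ i, 1 ≤ i → i < n → ∀ v ∈ M, g i * v ∈ M) {x : B} (hx : x ∈ Pos K t g n) :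
    x ∈ M := by
  suffices h : ∀ v ∈ M, x * v ∈ M by simpa using h 1 h1
  induction hx using Algebra.adjoin_induction with
  | mem x hx =>
    obtain ⟨h, rfl⟩ | ⟨i, hi, hi', rfl⟩ := hx
    · exact ht h
    · exact hg i hi hi'
  | algebraMap r =>
    intro v hv
    rw [← Algebra.smul_def]
    exact M.smul_mem r hv
  | add a b _ _ ha hb => intro v hv; rw [add_mul]; exact add_mem (ha v hv) (hb v hv)
  | mul a b _ _ ha hb => intro v hv; rw [mul_assoc]; exact ha _ (hb v hv)

theorem span_map_mem {s : Set B} {M : Submodule K B} (f : B →ₗ[K] B)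
    (h : ∀ x ∈ s, f x ∈ M) {v : B} (hv : v ∈ Submodule.span K s) : f v ∈ M := by
  have : Submodule.span K s ≤ M.comap f := Submodule.span_le.2 h
  exact this hv

/-! ### Spanning sets of the positive part -/

theorem V_g {n : ℕ} (hn : 1 ≤ n) {a b : B} (ha : a ∈ Pos K t g n) (hb : b ∈ Pos K t g n) :
    a * g n * b ∈ V K t g n :=
  Submodule.subset_span (Or.inl ⟨hn, a, ha, b, hb, rfl⟩)

theorem V_j {n : ℕ} (k : ℕ) {a : B} (ha : a ∈ Pos K t g n) :
    a * jm t g n ^ k ∈ V K t g n :=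
  Submodule.subset_span (Or.inr ⟨a, ha, k, rfl⟩)

theorem V_left {n : ℕ} {a v : B} (ha : a ∈ Pos K t g n) (hv : v ∈ V K t g n) :
    a * v ∈ V K t g n := by
  refine span_map_mem (LinearMap.mulLeft K a) ?_ hv
  rintro x (⟨hn, c, hc, d, hd, rfl⟩ | ⟨c, hc, k, rfl⟩)
  · simpa [mul_assoc] using V_g hn (mul_mem ha hc) hd
  · simpa [mul_assoc] using V_j k (mul_mem ha hc)

theorem Rel.V_right (H : Rel q t g gi) {n : ℕ} {a v : B} (ha : a ∈ Pos K t g n)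
    (hv : v ∈ V K t g n) : v * a ∈ V K t g n := by
  refine span_map_mem (LinearMap.mulRight K a) ?_ hv
  rintro x (⟨hn, c, hc, d, hd, rfl⟩ | ⟨c, hc, k, rfl⟩)
  · simpa [mul_assoc] using V_g hn hc (mul_mem hd ha)
  · simpa [mul_assoc, H.jm_comm n k ha] using V_j k (mul_mem hc ha)

theorem Rel.jm_mul_g (H : Rel q t g gi) (n : ℕ) :
    jm t g (n+1) * g (n+1) = (q - 1) • jm t g (n+1) + q • (g (n+1) * jm t g n) := by
  simp only [jm]
  rw [mul_assoc _ (g (n+1)), H.hq2 _ (by omega)]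
  simp [mul_add]

theorem Rel.g_mul_jm (H : Rel q t g gi) (n : ℕ) :
    g (n+1) * jm t g (n+1) = (q - 1) • jm t g (n+1) + q • (jm t g n * g (n+1)) := by
  simp only [jm]
  rw [← mul_assoc, ← mul_assoc, H.hq2 _ (by omega)]
  simp [add_mul]

theorem Rel.V_jm (H : Rel q t g gi) {n : ℕ} {v : B} (hv : v ∈ V K t g n) :
    jm t g n * v ∈ V K t g n := by
  refine span_map_mem (LinearMap.mulLeft K (jm t g n)) ?_ hv
  have hc : ∀ {a : B}, a ∈ Pos K t g n → jm t g n * a = a * jm t g n := by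
    intro a ha; simpa using H.jm_comm n 1 ha
  rintro x (⟨hn, c, hc', d, hd, rfl⟩ | ⟨c, hc', k, rfl⟩)
  · obtain ⟨m, rfl⟩ : ∃ m, n = m + 1 := ⟨n - 1, by omega⟩
    have h1 : c * d * jm t g (m+1) ^ 1 ∈ V K t g (m+1) := V_j 1 (mul_mem hc' hd)
    have h2 : c * g (m+1) * (jm t g m * d) ∈ V K t g (m+1) :=
      V_g hn hc' (mul_mem (jm_mem m) hd)
    have : LinearMap.mulLeft K (jm t g (m+1)) (c * g (m+1) * d)
        = (q - 1) • (c * d * jm t g (m+1) ^ 1) + q • (c * g (m+1) * (jm t g m * d)) := by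
      simp only [LinearMap.mulLeft_apply, pow_one]
      rw [← mul_assoc, ← mul_assoc, hc hc', mul_assoc c, H.jm_mul_g, mul_assoc c d, ← hc hd]
      simp only [mul_add, add_mul, mul_smul_comm, smul_mul_assoc, mul_assoc]
    rw [this]
    exact add_mem (Submodule.smul_mem _ _ h1) (Submodule.smul_mem _ _ h2)
  · rw [LinearMap.mulLeft_apply, ← mul_assoc, hc hc', mul_assoc, ← pow_succ']
    exact V_j _ hc'

theorem Rel.V_g_jm (H : Rel q t g gi) (m k : ℕ) :
    g (m+1) * jm t g (m+1) ^ k ∈ V K t g (m+1) := by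
  induction k with
  | zero => simpa using V_g (K := K) (t := t) (g := g) (n := m+1) (by omega) (one_mem _) (one_mem _)
  | succ k ih =>
    rw [pow_succ', ← mul_assoc, H.g_mul_jm, add_mul, smul_mul_assoc, smul_mul_assoc, ← pow_succ',
      mul_assoc]
    refine add_mem (Submodule.smul_mem _ _ ?_) (Submodule.smul_mem _ _ (V_left (jm_mem m) ih))
    simpa using V_j (K := K) (t := t) (g := g) (n := m+1) (k+1) (one_mem _)

theorem Rel.V_g_jm_g (H : Rel q t g gi) (m k : ℕ) :
    g (m+1) * jm t g m ^ k * g (m+1) ∈ V K t g (m+1) := by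
  induction k with
  | zero =>
    rw [pow_zero, mul_one, H.hq2 _ (by omega)]
    refine add_mem (Submodule.smul_mem _ _ ?_) (Submodule.smul_mem _ _ ?_)
    · simpa using H.V_g_jm m 0
    · simpa using V_j (K := K) (t := t) (g := g) (n := m+1) 0 (one_mem _)
  | succ k ih =>
    have : g (m+1) * jm t g m ^ (k+1) * g (m+1)
        = q⁻¹ • (jm t g (m+1) * (g (m+1) * jm t g m ^ k * g (m+1)))
          + (q⁻¹ - 1) • (jm t g (m+1) * (jm t g m ^ k * g (m+1) * 1)) := by
      calc _ = jm t g (m+1) * gi (m+1) * jm t g m ^ k * g (m+1) := by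
            simp only [jm]
            rw [mul_assoc _ (g (m+1)) (gi (m+1)), H.hg, mul_one, pow_succ']
            simp only [mul_assoc]
        _ = _ := by
            rw [H.gi_eq (by omega)]
            simp only [mul_add, add_mul, mul_smul_comm, smul_mul_assoc, mul_assoc, mul_one]
    rw [this]
    refine add_mem (Submodule.smul_mem _ _ (H.V_jm ih)) (Submodule.smul_mem _ _ (H.V_jm ?_))
    exact V_g (by omega) (pow_mem (jm_mem m) k) (one_mem _)

theorem Rel.V_g_mul (H : Rel q t g gi) {m : ℕ}
    (IH : ∀ x ∈ Pos K t g (m+1), x ∈ V K t g m) {v : B} (hv : v ∈ V K t g (m+1)) :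
    g (m+1) * v ∈ V K t g (m+1) := by
  refine span_map_mem (LinearMap.mulLeft K (g (m+1))) ?_ hv
  rintro x (⟨hn, a, ha, b, hb, rfl⟩ | ⟨a, ha, k, rfl⟩)
  · rw [LinearMap.mulLeft_apply, ← mul_assoc]
    refine H.V_right hb ?_
    rw [← mul_assoc]
    have key := span_map_mem (M := V K t g (m+1))
      ((LinearMap.mulRight K (g (m+1))).comp (LinearMap.mulLeft K (g (m+1)))) ?_ (IH a ha)
    · simpa using key
    rintro x (⟨hn, c, hc, d, hd, rfl⟩ | ⟨c, hc, k, rfl⟩)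
    · have hb := H.hbr m hn
      have e : g (m+1) * (c * g m * d) * g (m+1) = c * g m * g (m+1) * (g m * d) := by
        calc _ = (g (m+1) * c) * g m * (d * g (m+1)) := by simp only [mul_assoc]
          _ = c * (g (m+1) * g m * g (m+1)) * d := by
            rw [H.g_comm (by omega) hc, ← H.g_comm (by omega) hd]; simp only [mul_assoc]
          _ = _ := by rw [← hb]; simp only [mul_assoc]
      simp only [LinearMap.comp_apply, LinearMap.mulLeft_apply, LinearMap.mulRight_apply]
      rw [e]
      exact V_g (by omega) (mul_mem (Pos_mono (by omega) hc) (g_mem hn (by omega)))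
        (mul_mem (g_mem hn (by omega)) (Pos_mono (by omega) hd))
    · simp only [LinearMap.comp_apply, LinearMap.mulLeft_apply, LinearMap.mulRight_apply]
      rw [← mul_assoc, H.g_comm (by omega) hc, mul_assoc c, mul_assoc c]
      exact V_left (Pos_mono (by omega) hc) (H.V_g_jm_g m k)
  · rw [LinearMap.mulLeft_apply, ← H.jm_comm _ k ha, ← mul_assoc]
    exact H.V_right ha (H.V_g_jm m k)

theorem Rel.Pos_le_V (H : Rel q t g gi) (n : ℕ) : ∀ x ∈ Pos K t g (n+1), x ∈ V K t g n := by
  have h1 : ∀ n, (1 : B) ∈ V K t g n := fun n => by simpa using V_j (n := n) 0 (one_mem _)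
  induction n with
  | zero =>
    intro x hx
    exact Pos_le_of_mul (h1 0) (fun _ v hv => H.V_jm hv) (fun i _ _ => by omega) hx
  | succ m ih =>
    intro x hx
    refine Pos_le_of_mul (h1 _) (fun _ v hv => V_left (t_mem (by omega)) hv) ?_ hx
    intro i hi hi' v hv
    rcases Nat.lt_or_ge i (m+1) with h | h
    · exact V_left (g_mem hi h) hv
    · obtain rfl : i = m + 1 := by omega
      exact H.V_g_mul ih hv

theorem W_g {n : ℕ} (hn : 1 ≤ n) {a b : B} (ha : a ∈ Pos K t g n) (hb : b ∈ Pos K t g n) :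
    a * g n * b ∈ W K t g gi n :=
  Submodule.subset_span (Or.inl ⟨hn, a, ha, b, hb, rfl⟩)

theorem W_l {n : ℕ} (k : ℕ) {a b : B} (ha : a ∈ Pos K t g n) (hb : b ∈ Pos K t g n) :
    a * lp t g gi n ^ k * b ∈ W K t g gi n :=
  Submodule.subset_span (Or.inr ⟨a, ha, b, hb, k, rfl⟩)

theorem W_left {n : ℕ} {a v : B} (ha : a ∈ Pos K t g n) (hv : v ∈ W K t g gi n) :
    a * v ∈ W K t g gi n := by
  refine span_map_mem (LinearMap.mulLeft K a) ?_ hv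
  rintro x (⟨hn, c, hc, d, hd, rfl⟩ | ⟨c, hc, d, hd, k, rfl⟩)
  · simpa [mul_assoc] using W_g (gi := gi) hn (mul_mem ha hc) hd
  · simpa [mul_assoc] using W_l (gi := gi) k (mul_mem ha hc) hd

theorem W_right {n : ℕ} {a v : B} (ha : a ∈ Pos K t g n) (hv : v ∈ W K t g gi n) :
    v * a ∈ W K t g gi n := by
  refine span_map_mem (LinearMap.mulRight K a) ?_ hv
  rintro x (⟨hn, c, hc, d, hd, rfl⟩ | ⟨c, hc, d, hd, k, rfl⟩)
  · simpa [mul_assoc] using W_g (gi := gi) hn hc (mul_mem hd ha)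
  · simpa [mul_assoc] using W_l (gi := gi) k hc (mul_mem hd ha)

theorem conj_pow' {u v : B} (huv : u * v = 1) (hvu : v * u = 1) (x : B) (k : ℕ) :
    (u * x * v) ^ k = u * x ^ k * v :=
  Units.conj_pow ⟨u, v, huv, hvu⟩ x k

theorem lp_pow (hg : ∀ i, g i * gi i = 1) (hg' : ∀ i, gi i * g i = 1) (x : B) (n k : ℕ) :
    lp x g gi n ^ k = lp (x ^ k) g gi n := by
  induction n with
  | zero => rfl
  | succ n ih => rw [lp, lp, conj_pow' (hg _) (hg' _), ih]

theorem Rel.lp_conj (H : Rel q t g gi) (m k : ℕ) :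
    g (m+1) * lp t g gi m ^ k * gi (m+1) = lp t g gi (m+1) ^ k :=
  (conj_pow' (H.hg _) (H.hg' _) _ k).symm

/-- Conjugation by `g_{m+1}` carries the spanning set of level `m` into that of level `m+1`. -/
theorem Rel.W_conj (H : Rel q t g gi) {m : ℕ} {x : B} (hx : x ∈ W K t g gi m) :
    g (m+1) * x * gi (m+1) ∈ W K t g gi (m+1) := by
  have key := span_map_mem (M := W K t g gi (m+1))
    ((LinearMap.mulRight K (gi (m+1))).comp (LinearMap.mulLeft K (g (m+1)))) ?_ hx
  · simpa using key
  rintro x (⟨hn, c, hc, d, hd, rfl⟩ | ⟨c, hc, d, hd, k, rfl⟩) <;>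
    simp only [LinearMap.comp_apply, LinearMap.mulLeft_apply, LinearMap.mulRight_apply]
  · have hb := H.hbr m hn
    have hb' : g (m+1) * g m * gi (m+1) = gi m * g (m+1) * g m := by
      calc _ = gi m * (g m * g (m+1) * g m) * gi (m+1) := by
            simp only [← mul_assoc, H.hg', one_mul]
        _ = _ := by rw [hb]; simp only [mul_assoc, H.hg, mul_one]
    have e : g (m+1) * (c * g m * d) * gi (m+1) = c * gi m * g (m+1) * (g m * d) := by
      calc _ = (g (m+1) * c) * g m * (d * gi (m+1)) := by simp only [mul_assoc]
        _ = c * (g (m+1) * g m * gi (m+1)) * d := by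
          rw [H.g_comm (by omega) hc, ← H.gi_comm (by omega) hd]; simp only [mul_assoc]
        _ = _ := by rw [hb']; simp only [mul_assoc]
    rw [e]
    exact W_g (by omega) (mul_mem (Pos_mono (by omega) hc) (H.gi_mem hn (by omega)))
      (mul_mem (g_mem hn (by omega)) (Pos_mono (by omega) hd))
  · have e : g (m+1) * (c * lp t g gi m ^ k * d) * gi (m+1) = c * lp t g gi (m+1) ^ k * d := by
      calc _ = (g (m+1) * c) * lp t g gi m ^ k * (d * gi (m+1)) := by simp only [mul_assoc]
        _ = _ := by
          rw [H.g_comm (by omega) hc, ← H.gi_comm (by omega) hd, ← H.lp_conj]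
          simp only [mul_assoc]
    rw [e]
    exact W_l k (Pos_mono (by omega) hc) (Pos_mono (by omega) hd)

theorem Rel.W_gxg (H : Rel q t g gi) {m : ℕ}
    (IH : ∀ x ∈ Pos K t g (m+1), x ∈ W K t g gi m) {x : B} (hx : x ∈ Pos K t g (m+1)) :
    g (m+1) * x * g (m+1) ∈ W K t g gi (m+1) := by
  have hgi : g (m+1) = q • gi (m+1) + (q - 1) • (1 : B) := by
    rw [H.gi_eq (i := m+1) (by omega), smul_add, smul_smul, smul_smul, mul_sub,
      mul_inv_cancel₀ H.q0]
    module
  have e : g (m+1) * x * g (m+1)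
      = q • (g (m+1) * x * gi (m+1)) + (q - 1) • (1 * g (m+1) * x) := by
    conv_lhs => rw [mul_assoc]; rhs; rhs; rw [hgi]
    simp only [mul_add, mul_smul_comm, mul_one, one_mul, mul_assoc]
  rw [e]
  exact add_mem (Submodule.smul_mem _ _ (H.W_conj (IH x hx)))
    (Submodule.smul_mem _ _ (W_g (by omega) (one_mem _) hx))

/-- The powers of `t_{m+1}` lie in the span `W`; the two other memberships make the induction on
the exponent go through. -/
theorem Rel.W_jm (H : Rel q t g gi) {m : ℕ}
    (IH : ∀ x ∈ Pos K t g (m+1), x ∈ W K t g gi m) (k : ℕ) :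
    jm t g (m+1) ^ k ∈ W K t g gi (m+1) ∧ g (m+1) * jm t g (m+1) ^ k ∈ W K t g gi (m+1) ∧
      ∀ x ∈ Pos K t g (m+1), g (m+1) * x * g (m+1) * jm t g (m+1) ^ k ∈ W K t g gi (m+1) := by
  induction k with
  | zero =>
    refine ⟨?_, ?_, fun x hx => ?_⟩
    · simpa using W_l (K := K) (t := t) (g := g) (gi := gi) (n := m+1) 0 (one_mem _) (one_mem _)
    · simpa using W_g (K := K) (t := t) (g := g) (gi := gi) (n := m+1) (by omega)
        (one_mem _) (one_mem _)
    · simpa using H.W_gxg IH hx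
  | succ k ih =>
    obtain ⟨i1, i2, i3⟩ := ih
    have j1 : jm t g (m+1) ^ (k+1) ∈ W K t g gi (m+1) := by
      rw [pow_succ']
      exact i3 _ (jm_mem m)
    have j2 : g (m+1) * jm t g (m+1) ^ (k+1) ∈ W K t g gi (m+1) := by
      rw [pow_succ', ← mul_assoc, H.g_mul_jm, add_mul, smul_mul_assoc, smul_mul_assoc,
        ← pow_succ', mul_assoc]
      exact add_mem (Submodule.smul_mem _ _ j1)
        (Submodule.smul_mem _ _ (W_left (jm_mem m) i2))
    refine ⟨j1, j2, fun x hx => ?_⟩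
    have e : g (m+1) * x * g (m+1) * jm t g (m+1) ^ (k+1)
        = (q - 1) • (g (m+1) * jm t g (m+1) ^ (k+1) * x)
          + q • (g (m+1) * (x * jm t g m) * g (m+1) * jm t g (m+1) ^ k) := by
      rw [mul_assoc (g (m+1)) _ x, H.jm_comm _ _ hx, pow_succ', mul_assoc _ (g (m+1)),
        ← mul_assoc (g (m+1)) (jm t g (m+1)), H.g_mul_jm]
      simp only [mul_add, add_mul, mul_smul_comm, smul_mul_assoc, mul_assoc]
    rw [e]
    exact add_mem (Submodule.smul_mem _ _ (W_right hx j2))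
      (Submodule.smul_mem _ _ (i3 _ (mul_mem hx (jm_mem m))))

theorem Rel.Pos_le_W (H : Rel q t g gi) (n : ℕ) :
    ∀ x ∈ Pos K t g (n+1), x ∈ W K t g gi n := by
  induction n with
  | zero =>
    intro x hx
    refine span_map_mem LinearMap.id ?_ (H.Pos_le_V 0 x hx)
    rintro x (⟨hn, -⟩ | ⟨c, hc, k, rfl⟩)
    · omega
    · simpa [jm, lp] using W_l (gi := gi) k hc (one_mem _)
  | succ m ih =>
    intro x hx
    refine span_map_mem LinearMap.id ?_ (H.Pos_le_V (m+1) x hx)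
    rintro x (⟨hn, c, hc, d, hd, rfl⟩ | ⟨c, hc, k, rfl⟩)
    · exact W_g hn hc hd
    · exact W_left hc (H.W_jm ih k).1

/-- The uniqueness argument for Markov traces, phrased for the set `D` on which two of them agree:
a submodule stable under cyclic rotation and under the two Markov rules contains the whole positive
part of every level. -/
theorem Rel.Pos_le (H : Rel q t g gi) (D : Submodule K B) (D1 : (1 : B) ∈ D)
    (Dc : ∀ a b, a * b ∈ D → b * a ∈ D)
    (Dg : ∀ n, ∀ a ∈ Pos K t g n, 1 ≤ n → a ∈ D → a * g n ∈ D)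
    (Dl : ∀ n, ∀ a ∈ Pos K t g n, ∀ k : ℕ, a ∈ D → a * lp t g gi n ^ k ∈ D)
    (n : ℕ) : ∀ x ∈ Pos K t g n, x ∈ D := by
  induction n with
  | zero =>
    intro x hx
    exact Pos_le_of_mul D1 (fun h => by omega) (fun i _ _ => by omega) hx
  | succ n ih =>
    intro x hx
    refine span_map_mem LinearMap.id ?_ (H.Pos_le_W n x hx)
    rintro x (⟨hn, c, hc, d, hd, rfl⟩ | ⟨c, hc, d, hd, k, rfl⟩)
    · apply Dc
      rw [← mul_assoc]
      exact Dg n _ (mul_mem hd hc) hn (ih _ (mul_mem hd hc))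
    · apply Dc
      rw [← mul_assoc]
      exact Dl n _ (mul_mem hd hc) k (ih _ (mul_mem hd hc))

end

/-! ### Loops of either chirality -/

section
variable {F A : Type*} [Field F] [Ring A] [Algebra F A] {q : F} {t tinv : A} {g gi : ℕ → A}

theorem Hsub_g {n i : ℕ} (h : 1 ≤ i) (h' : i < n) : g i ∈ Hsub F t tinv g gi n :=
  Algebra.subset_adjoin (Or.inr ⟨i, h, h', Or.inl rfl⟩)

theorem Hsub_gi {n i : ℕ} (h : 1 ≤ i) (h' : i < n) : gi i ∈ Hsub F t tinv g gi n :=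
  Algebra.subset_adjoin (Or.inr ⟨i, h, h', Or.inr rfl⟩)

theorem Hsub_t {n : ℕ} (h : 1 ≤ n) : t ∈ Hsub F t tinv g gi n :=
  Algebra.subset_adjoin (Or.inl ⟨h, Or.inl rfl⟩)

theorem Hsub_tinv {n : ℕ} (h : 1 ≤ n) : tinv ∈ Hsub F t tinv g gi n :=
  Algebra.subset_adjoin (Or.inl ⟨h, Or.inr rfl⟩)

theorem Hsub_mono {m n : ℕ} (h : m ≤ n) : Hsub F t tinv g gi m ≤ Hsub F t tinv g gi n := by
  apply Algebra.adjoin_mono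
  rintro x (⟨h1, h2⟩ | ⟨i, h1, h2, h3⟩)
  · exact Or.inl ⟨by omega, h2⟩
  · exact Or.inr ⟨i, h1, by omega, h3⟩

/-- The relations are invariant under `q ↦ q⁻¹`, `t ↦ t⁻¹`, `g_i ↦ g_i⁻¹`. -/
theorem Rel.inv (H : Rel q t g gi) (ht : t * tinv = 1) (ht' : tinv * t = 1) :
    Rel q⁻¹ tinv gi g := by
  let T : Aˣ := ⟨t, tinv, ht, ht'⟩
  let G : ℕ → Aˣ := fun i => ⟨g i, gi i, H.hg i, H.hg' i⟩
  refine ⟨inv_ne_zero H.q0, H.hg', H.hg, ?_, ?_, ?_, ?_, ?_⟩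
  · have h : G 1 * T * G 1 * T = T * G 1 * T * G 1 := Units.ext H.hbt
    have h' := congrArg (fun x : Aˣ => ((x⁻¹ : Aˣ) : A)) h
    simpa [mul_assoc, T, G] using h'.symm
  · intro i hi
    have h : T * G i = G i * T := Units.ext (H.hct i hi)
    have h' := congrArg (fun x : Aˣ => ((x⁻¹ : Aˣ) : A)) h
    simpa [mul_assoc, T, G] using h'.symm
  · intro i hi
    have h : G i * G (i+1) * G i = G (i+1) * G i * G (i+1) := Units.ext (H.hbr i hi)
    have h' := congrArg (fun x : Aˣ => ((x⁻¹ : Aˣ) : A)) h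
    simpa [mul_assoc, G] using h'
  · intro i j hi hj
    have h : G i * G j = G j * G i := Units.ext (H.hcm i j hi hj)
    have h' := congrArg (fun x : Aˣ => ((x⁻¹ : Aˣ) : A)) h
    simpa [mul_assoc, G] using h'.symm
  · intro i hi
    conv_lhs => rhs; rw [H.gi_eq hi]
    rw [mul_add, mul_smul_comm, mul_smul_comm, H.hg', mul_one, add_comm]

theorem Hsub_comm (H : Rel q t g gi) (ht : t * tinv = 1) (ht' : tinv * t = 1) {n j : ℕ}
    (hj : n < j) {x : A} (hx : x ∈ Hsub F t tinv g gi n) : g j * x = x * g j := by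
  have hG : ∀ {y y' : A}, y * y' = 1 → y' * y = 1 → g j * y = y * g j → g j * y' = y' * g j := by
    intro y y' h1 h2 h
    calc g j * y' = y' * y * g j * y' := by rw [h2, one_mul]
      _ = y' * (g j * y) * y' := by rw [h]; simp only [mul_assoc]
      _ = _ := by simp only [mul_assoc, h1, mul_one]
  induction hx using Algebra.adjoin_induction with
  | mem x hx =>
    obtain ⟨h, rfl | rfl⟩ | ⟨i, hi, hi', rfl | rfl⟩ := hx
    · exact (H.hct j (by omega)).symm
    · exact hG ht ht' (H.hct j (by omega)).symm
    · exact (H.hcm i j hi (by omega)).symm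
    · exact hG (H.hg i) (H.hg' i) (H.hcm i j hi (by omega)).symm
  | algebraMap r => exact (Algebra.commutes r _).symm
  | add a b _ _ ha hb => rw [mul_add, add_mul, ha, hb]
  | mul a b _ _ ha hb => rw [← mul_assoc, ha, mul_assoc, hb, mul_assoc]

theorem Hsub_lp {x : A} (hx : x ∈ Hsub F t tinv g gi 1) (m : ℕ) :
    lp x gi g m ∈ Hsub F t tinv g gi (m+1) := by
  induction m with
  | zero => exact hx
  | succ m ih =>
    exact mul_mem (mul_mem (Hsub_gi (by omega) (by omega)) (Hsub_mono (by omega) ih))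
      (Hsub_g (by omega) (by omega))

/-- Conjugation of `y` by `g_{m+j} ⋯ g_{m+1}`. -/
def up (g gi : ℕ → A) : ℕ → ℕ → A → A
  | _, 0, y => y
  | m, j + 1, y => up g gi (m+1) j (g (m+1) * y * gi (m+1))

theorem up_succ (m j : ℕ) (y : A) :
    up g gi m (j+1) y = g (m+j+1) * up g gi m j y * gi (m+j+1) := by
  induction j generalizing m y with
  | zero => rfl
  | succ j ih =>
    rw [up, ih]
    simp only [up]
    rw [show m + 1 + j + 1 = m + (j + 1) + 1 by omega]

theorem up_zero (n : ℕ) (x : A) : up g gi 0 n x = lp x g gi n := by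
  induction n with
  | zero => rfl
  | succ n ih => rw [up_succ, ih, lp, Nat.zero_add]

theorem up_conj {m : ℕ} {u v : A} (hu : ∀ i, m < i → g i * u = u * g i)
    (hv : ∀ i, m < i → v * gi i = gi i * v) (j : ℕ) (y : A) :
    up g gi m j (u * y * v) = u * up g gi m j y * v := by
  induction j with
  | zero => rfl
  | succ j ih =>
    rw [up_succ, up_succ, ih]
    calc _ = (g (m+j+1) * u) * up g gi m j y * (v * gi (m+j+1)) := by simp only [mul_assoc]
      _ = _ := by rw [hu _ (by omega), hv _ (by omega)]; simp only [mul_assoc]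

/-- `y` acts under the trace as the scalar `c` against the whole level `n`. -/
def Absorbs (t tinv : A) (g gi : ℕ → A) (tr : A →ₗ[F] F) (c : F) (n : ℕ) (y : A) : Prop :=
  ∀ a ∈ Hsub F t tinv g gi n, tr (a * y) = c * tr a

/-- The trace does not see the direction in which the top generator conjugates. -/
theorem tr_flip (H : Rel q t g gi) {z : F} {tr : A →ₗ[F] F}
    (htrc : ∀ a b : A, tr (a * b) = tr (b * a))
    (htrg : ∀ (n : ℕ) (a : A), 1 ≤ n → a ∈ Hsub F t tinv g gi n → tr (a * g n) = z * tr a)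
    {n : ℕ} (hn : 1 ≤ n) {a x : A} (ha : a ∈ Hsub F t tinv g gi n)
    (hx : x ∈ Hsub F t tinv g gi n) :
    tr (a * (gi n * x * g n)) = tr (a * (g n * x * gi n)) := by
  have h1 : tr (a * (g n * x)) = z * tr (a * x) := by
    rw [← mul_assoc, htrc, ← mul_assoc, htrg n _ hn (mul_mem hx ha), htrc]
  have h2 : tr (a * (x * g n)) = z * tr (a * x) := by
    rw [← mul_assoc, htrg n _ hn (mul_mem ha hx)]
  rw [H.gi_eq hn]
  simp only [mul_add, add_mul, smul_mul_assoc, mul_smul_comm, mul_one, one_mul, map_add, map_smul,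
    h1, h2]

/-- A positive crossing at height `m` below `j` positive ones may be made negative. The change at
the top strand is `tr_flip`; a lower crossing is first moved to the top by braid relations, each
costing a conjugation inside level `n`, which the trace absorbs. -/
theorem absorbs_flip (H : Rel q t g gi) (ht : t * tinv = 1) (ht' : tinv * t = 1)
    {z : F} {tr : A →ₗ[F] F}
    (htrc : ∀ a b : A, tr (a * b) = tr (b * a))
    (htrg : ∀ (n : ℕ) (a : A), 1 ≤ n → a ∈ Hsub F t tinv g gi n → tr (a * g n) = z * tr a)
    {c : F} {n : ℕ} (j m : ℕ) (hm : 1 ≤ m) (hn : n = m + j) {x : A}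
    (hx : x ∈ Hsub F t tinv g gi m)
    (h : Absorbs t tinv g gi tr c n (up g gi m j (g m * x * gi m))) :
    Absorbs t tinv g gi tr c n (up g gi m j (gi m * x * g m)) := by
  induction j generalizing m x with
  | zero =>
    intro a ha
    obtain rfl : n = m := hn
    simp only [up] at h ⊢
    rw [tr_flip H htrc htrg hm ha hx]
    exact h a ha
  | succ j ih =>
    have hx' : g m * x * gi m ∈ Hsub F t tinv g gi (m+1) :=
      mul_mem (mul_mem (Hsub_g hm (by omega)) (Hsub_mono (by omega) hx)) (Hsub_gi hm (by omega))
    have h' := ih (m+1) (by omega) (by omega) hx' h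
    have hb := H.hbr m hm
    -- The braid relation slides the negative crossing one strand up, at the price of
    -- a conjugation by `g m`.
    have hb1 : g (m+1) * gi m = gi m * gi (m+1) * g m * g (m+1) := by
      calc _ = gi m * gi (m+1) * (g (m+1) * g m * g (m+1)) * gi m := by
            simp only [← mul_assoc]
            rw [mul_assoc (gi m), H.hg', mul_one, H.hg', one_mul]
        _ = _ := by rw [← hb]; simp only [mul_assoc, H.hg, mul_one]
    have hb2 : g m * gi (m+1) = gi (m+1) * gi m * g (m+1) * g m := by
      calc _ = gi (m+1) * gi m * (g m * g (m+1) * g m) * gi (m+1) := by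
            simp only [← mul_assoc]
            rw [mul_assoc (gi (m+1)), H.hg', mul_one, H.hg', one_mul]
        _ = _ := by rw [hb]; simp only [mul_assoc, H.hg, mul_one]
    have e : g (m+1) * (gi m * x * g m) * gi (m+1)
        = gi m * (gi (m+1) * (g m * x * gi m) * g (m+1)) * g m := by
      calc _ = (g (m+1) * gi m) * x * (g m * gi (m+1)) := by simp only [mul_assoc]
        _ = gi m * gi (m+1) * g m * (g (m+1) * x) * (gi (m+1) * gi m * g (m+1) * g m) := by
            rw [hb1, hb2]; simp only [mul_assoc]
        _ = gi m * gi (m+1) * g m * x * (g (m+1) * gi (m+1)) * gi m * g (m+1) * g m := by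
            rw [Hsub_comm H ht ht' (Nat.lt_succ_self m) hx]; simp only [mul_assoc]
        _ = _ := by rw [H.hg, mul_one]; simp only [mul_assoc]
    have hgm : g m ∈ Hsub F t tinv g gi n := Hsub_g hm (by omega)
    have hgim : gi m ∈ Hsub F t tinv g gi n := Hsub_gi hm (by omega)
    have hgim' : gi m ∈ Hsub F t tinv g gi (m+1) := Hsub_gi hm (by omega)
    intro a ha
    rw [up, e, up_conj (fun i hi => Hsub_comm H ht ht' hi hgim')
      (fun i hi => H.inv ht ht' |>.g_comm (K := F) (n := m+1) hi
        (H.inv ht ht' |>.gi_mem hm (by omega)) |>.symm)]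
    have := h' (g m * a * gi m) (mul_mem (mul_mem hgm ha) hgim)
    calc _ = tr ((a * gi m * up g gi (m+1) j (gi (m+1) * (g m * x * gi m) * g (m+1))) * g m) := by
          simp only [mul_assoc]
      _ = tr (g m * a * gi m * up g gi (m+1) j (gi (m+1) * (g m * x * gi m) * g (m+1))) := by
          rw [htrc]; simp only [mul_assoc]
      _ = c * tr (g m * (a * gi m)) := by rw [this, mul_assoc]
      _ = _ := by rw [htrc, mul_assoc, H.hg', mul_one]

/-- The Markov rule for `g_n ⋯ g_1 x g_1⁻¹ ⋯ g_n⁻¹` implies the one for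
`g_n⁻¹ ⋯ g_1⁻¹ x g_1 ⋯ g_n`: the crossings are made negative one at a time, starting from the
lowest. -/
theorem absorbs_all (H : Rel q t g gi) (ht : t * tinv = 1) (ht' : tinv * t = 1)
    {z : F} {tr : A →ₗ[F] F}
    (htrc : ∀ a b : A, tr (a * b) = tr (b * a))
    (htrg : ∀ (n : ℕ) (a : A), 1 ≤ n → a ∈ Hsub F t tinv g gi n → tr (a * g n) = z * tr a)
    {c : F} {n : ℕ} {x : A} (hx : x ∈ Hsub F t tinv g gi 1)
    (h : Absorbs t tinv g gi tr c n (lp x g gi n)) :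
    Absorbs t tinv g gi tr c n (lp x gi g n) := by
  suffices key : ∀ m j, n = m + j → Absorbs t tinv g gi tr c n (up g gi m j (lp x gi g m)) from
    key n 0 rfl
  intro m
  induction m with
  | zero =>
    rintro j hj
    obtain rfl : n = j := by omega
    rw [lp, up_zero]
    exact h
  | succ m ih =>
    intro j hj
    exact absorbs_flip H ht ht' htrc htrg j (m+1) (by omega) hj (Hsub_lp hx m)
      (ih (j+1) (by omega))

end

/-! ### The twisted product algebra -/

/-- The ring `A` with scalars acting through the ring endomorphism `I`. In `Tw I A × A` the scalar
`q⁻¹` then acts as `(q, q⁻¹)`, and `(x, y) ↦ tr x` and `(x, y) ↦ I (tr y)` are both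
`I`-semilinear. -/
def Tw {F : Type*} [Field F] (_ : F →+* F) (A : Type*) : Type _ := A

instance {F : Type*} [Field F] (I : F →+* F) (A : Type*) [Ring A] : Ring (Tw I A) :=
  inferInstanceAs (Ring A)

/-- The identity map of `A`, as a ring isomorphism from the twisted copy. -/
def Tw.e {F : Type*} [Field F] (I : F →+* F) (A : Type*) [Ring A] : Tw I A ≃+* A :=
  RingEquiv.refl A

instance {F : Type*} [Field F] (I : F →+* F) (A : Type*) [Ring A] [Algebra F A] :
    Algebra F (Tw I A) :=
  RingHom.toAlgebra' (((Tw.e I A).symm : A →+* Tw I A).comp ((algebraMap F A).comp I))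
    (fun c x => (Tw.e I A).injective (by simpa using Algebra.commutes (I c) (Tw.e I A x)))

theorem Tw.e_algebraMap {F : Type*} [Field F] (I : F →+* F) {A : Type*} [Ring A] [Algebra F A]
    (c : F) : Tw.e I A (algebraMap F (Tw I A) c) = algebraMap F A (I c) :=
  rfl

theorem Tw.e_smul {F : Type*} [Field F] (I : F →+* F) {A : Type*} [Ring A] [Algebra F A]
    (c : F) (x : Tw I A) : Tw.e I A (c • x) = I c • Tw.e I A x := by
  rw [Algebra.smul_def, Algebra.smul_def, map_mul, Tw.e_algebraMap]

section
variable {F A : Type*} [Field F] [Ring A] [Algebra F A] {q : F} {t tinv : A} {g gi : ℕ → A}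

theorem Rel.twist (H : Rel q t g gi) (I : F →+* F) {r : F} (hr : I r = q) :
    Rel r ((Tw.e I A).symm t) (fun i => (Tw.e I A).symm (g i))
      (fun i => (Tw.e I A).symm (gi i)) := by
  refine ⟨?_, ?_, ?_, ?_, ?_, ?_, ?_, ?_⟩
  · rintro rfl
    exact H.q0 (by rw [← hr, map_zero])
  · exact fun i => (Tw.e I A).injective (by simpa using H.hg i)
  · exact fun i => (Tw.e I A).injective (by simpa using H.hg' i)
  · exact (Tw.e I A).injective (by simpa using H.hbt)
  · exact fun i h => (Tw.e I A).injective (by simpa using H.hct i h)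
  · exact fun i h => (Tw.e I A).injective (by simpa using H.hbr i h)
  · exact fun i j h h' => (Tw.e I A).injective (by simpa using H.hcm i j h h')
  · exact fun i h => (Tw.e I A).injective (by simpa [Tw.e_smul, hr] using H.hq2 i h)

theorem Tw.e_lp (I : F →+* F) (n : ℕ) :
    Tw.e I A (lp ((Tw.e I A).symm t) (fun i => (Tw.e I A).symm (g i))
      (fun i => (Tw.e I A).symm (gi i)) n) = lp t g gi n := by
  induction n with
  | zero => simp [lp]
  | succ n ih => simp [lp, ih]

theorem Tw.e_jm (I : F →+* F) (n : ℕ) :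
    Tw.e I A (jm ((Tw.e I A).symm t) (fun i => (Tw.e I A).symm (g i)) n) = jm t g n := by
  induction n with
  | zero => simp [jm]
  | succ n ih => simp [jm, ih]

theorem Rel.prod {A' : Type*} [Ring A'] [Algebra F A'] {t' : A'} {g' gi' : ℕ → A'}
    (H : Rel q t g gi) (H' : Rel q t' g' gi') :
    Rel q (t, t') (fun i => (g i, g' i)) (fun i => (gi i, gi' i)) := by
  refine ⟨H.q0, ?_, ?_, ?_, ?_, ?_, ?_, ?_⟩
  · exact fun i => Prod.ext (H.hg i) (H'.hg i)
  · exact fun i => Prod.ext (H.hg' i) (H'.hg' i)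
  · exact Prod.ext H.hbt H'.hbt
  · exact fun i h => Prod.ext (H.hct i h) (H'.hct i h)
  · exact fun i h => Prod.ext (H.hbr i h) (H'.hbr i h)
  · exact fun i j h h' => Prod.ext (H.hcm i j h h') (H'.hcm i j h h')
  · exact fun i h => Prod.ext (H.hq2 i h) (H'.hq2 i h)

theorem lp_prod {A' : Type*} [Ring A'] (t' : A') (g' gi' : ℕ → A') (n : ℕ) :
    lp (t, t') (fun i => (g i, g' i)) (fun i => (gi i, gi' i)) n
      = (lp t g gi n, lp t' g' gi' n) := by
  induction n with
  | zero => rfl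
  | succ n ih => rw [lp, ih]; rfl

theorem jm_prod {A' : Type*} [Ring A'] (t' : A') (g' : ℕ → A') (n : ℕ) :
    jm (t, t') (fun i => (g i, g' i)) n = (jm t g n, jm t' g' n) := by
  induction n with
  | zero => rfl
  | succ n ih => rw [jm, ih]; rfl

/-- The loop generator `(t, t⁻¹)` of the twisted product. -/
def pt (I : F →+* F) (t tinv : A) : Tw I A × A := ((Tw.e I A).symm t, tinv)

/-- The braiding generators `(g_i, g_i⁻¹)` of the twisted product. -/
def pg (I : F →+* F) (g gi : ℕ → A) (i : ℕ) : Tw I A × A := ((Tw.e I A).symm (g i), gi i)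

/-- Both coordinates of a positive element of level `n` of the twisted product lie in level `n`. -/
theorem Pos_prod_mem (I : F →+* F) {n : ℕ} {x : Tw I A × A}
    (hx : x ∈ Pos F (pt I t tinv) (pg I g gi) n) :
    Tw.e I A x.1 ∈ Hsub F t tinv g gi n ∧ x.2 ∈ Hsub F t tinv g gi n := by
  induction hx using Algebra.adjoin_induction with
  | mem x hx =>
    obtain ⟨h, rfl⟩ | ⟨i, hi, hi', rfl⟩ := hx
    · simpa [pt] using And.intro (Hsub_t h) (Hsub_tinv h)
    · simpa [pg] using And.intro (Hsub_g hi hi') (Hsub_gi hi hi')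
  | algebraMap r => exact ⟨Subalgebra.algebraMap_mem _ (I r), Subalgebra.algebraMap_mem _ r⟩
  | add a b _ _ ha hb =>
    simpa using And.intro (add_mem ha.1 hb.1) (add_mem ha.2 hb.2)
  | mul a b _ _ ha hb =>
    simpa using And.intro (mul_mem ha.1 hb.1) (mul_mem ha.2 hb.2)

/-- The pairs `(x, y)` with `tr x = I (tr y)`. -/
def agree (I : F →+* F) (tr : A →ₗ[F] F) : Submodule F (Tw I A × A) where
  carrier := {x | tr (Tw.e I A x.1) = I (tr x.2)}
  zero_mem' := by simp
  add_mem' := by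
    intro a b ha hb
    simp only [Set.mem_ofPred_eq] at ha hb ⊢
    simp [ha, hb]
  smul_mem' := by
    intro c a ha
    simp only [Set.mem_ofPred_eq] at ha ⊢
    simp [Tw.e_smul, ha]

theorem mem_agree {I : F →+* F} {tr : A →ₗ[F] F} {x : Tw I A × A} :
    x ∈ agree I tr ↔ tr (Tw.e I A x.1) = I (tr x.2) := Iff.rfl

end

end HeckeB

open HeckeB

/-- Proposition 2 of the paper: for every `k ∈ ℕ` and every
`τ = t^{k_0} t_1^{k_1} ⋯ t_n^{k_n} ∈ Λᵃᵘᵍ⁺_{(k)}` (all `k_i > 0`, `∑ k_i = k`),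
`tr(τ) = I(tr(f(τ)))` where `f(τ) = t^{-k_0} t_1^{-k_1} ⋯ t_n^{-k_n}`. -/
theorem homflypt_stmt12
    {F : Type*} [Field F] {A : Type*} [Ring A] [Algebra F A]
    (q z : F) (hq0 : q ≠ 0) (hz0 : z ≠ 0)
    (t tinv : A) (g ginv : ℕ → A)
    (ht : t * tinv = 1) (ht' : tinv * t = 1)
    (hg : ∀ i, g i * ginv i = 1) (hg' : ∀ i, ginv i * g i = 1)
    (hbt : g 1 * t * g 1 * t = t * g 1 * t * g 1)
    (hct : ∀ i, 2 ≤ i → t * g i = g i * t)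
    (hbr : ∀ i, 1 ≤ i → g i * g (i+1) * g i = g (i+1) * g i * g (i+1))
    (hcm : ∀ i j, 1 ≤ i → i + 2 ≤ j → g i * g j = g j * g i)
    (hq2 : ∀ i, 1 ≤ i → g i * g i = (q - 1) • g i + q • (1 : A))
    (tt ttinv tp tpinv : ℕ → A)
    (htt0 : tt 0 = t) (htts : ∀ i, tt (i+1) = g (i+1) * tt i * g (i+1))
    (htti0 : ttinv 0 = tinv)
    (httis : ∀ i, ttinv (i+1) = ginv (i+1) * ttinv i * ginv (i+1))
    (htp0 : tp 0 = t) (htps : ∀ i, tp (i+1) = g (i+1) * tp i * ginv (i+1))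
    (htpi0 : tpinv 0 = tinv)
    (htpis : ∀ i, tpinv (i+1) = g (i+1) * tpinv i * ginv (i+1))
    (s : ℤ → F) (tr : A →ₗ[F] F)
    (htr1 : tr 1 = 1)
    (htrc : ∀ a b : A, tr (a * b) = tr (b * a))
    (htrg : ∀ (n : ℕ) (a : A), 1 ≤ n → a ∈ Hsub F t tinv g ginv n →
      tr (a * g n) = z * tr a)
    (htrs : ∀ (n : ℕ) (a : A) (k : ℤ), a ∈ Hsub F t tinv g ginv n →
      tr (a * zp (tp n) (tpinv n) k) = s k * tr a)
    (p : ℕ) (lam : F) (hlam : lam = (z + 1 - q) / (q * z)) (hlam0 : lam ≠ 0)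
    (I : F →+* F) (hIq : I q = q⁻¹) (hIz : I z = lam * z)
    (hIs1 : ∀ k : ℕ, I (s (-(k : ℤ))) = s (k : ℤ))
    (hIs2 : ∀ k : ℕ, k ≤ p → I (s ((p : ℤ) - (k : ℤ))) = s ((p : ℤ) + (k : ℤ)))
    (k : ℕ) (n : ℕ) (kexp : ℕ → ℕ) (hpos : ∀ i ≤ n, 1 ≤ kexp i)
    (hsum : ∑ i ∈ Finset.range (n+1), kexp i = k) :
    tr ((List.ofFn fun i : Fin (n+1) => tt i.1 ^ kexp i.1).prod)
      = I (tr ((List.ofFn fun i : Fin (n+1) => ttinv i.1 ^ kexp i.1).prod)) := by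
  have H : Rel q t g ginv := ⟨hq0, hg, hg', hbt, hct, hbr, hcm, hq2⟩
  have Hp : Rel q⁻¹ (pt I t tinv) (pg I g ginv) (pg I ginv g) :=
    (H.twist I (by rw [map_inv₀, hIq, inv_inv])).prod (H.inv ht ht')
  have ett : ∀ i, tt i = jm t g i := fun i => by
    induction i with
    | zero => exact htt0
    | succ i ih => rw [htts, ih]; rfl
  have etti : ∀ i, ttinv i = jm tinv ginv i := fun i => by
    induction i with
    | zero => exact htti0
    | succ i ih => rw [httis, ih]; rfl
  have etp : ∀ i, tp i = lp t g ginv i := fun i => by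
    induction i with
    | zero => exact htp0
    | succ i ih => rw [htps, ih]; rfl
  have etpi : ∀ i, tpinv i = lp tinv g ginv i := fun i => by
    induction i with
    | zero => exact htpi0
    | succ i ih => rw [htpis, ih]; rfl
  have h_plus : ∀ (n : ℕ) (a : A) (k : ℕ), a ∈ Hsub F t tinv g ginv n →
      tr (a * lp t g ginv n ^ k) = s k * tr a := by
    intro n a k ha
    have h := htrs n a k ha
    rwa [zp, if_pos (by positivity), Int.toNat_natCast, etp] at h
  have h_minus : ∀ (n : ℕ) (a : A) (k : ℕ), a ∈ Hsub F t tinv g ginv n →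
      tr (a * lp tinv ginv g n ^ k) = s (-(k : ℤ)) * tr a := by
    intro n a k ha
    rw [lp_pow hg' hg]
    refine absorbs_all H ht ht' htrc htrg (pow_mem (Hsub_tinv le_rfl) k) ?_ a ha
    intro b hb
    have h := htrs n b (-(k : ℤ)) hb
    rw [← lp_pow hg hg', ← etpi]
    rcases Nat.eq_zero_or_pos k with rfl | hk
    · simpa [zp] using h
    · rwa [zp, if_neg (by omega), neg_neg, Int.toNat_natCast] at h
  -- `I` exchanges `z` with `λ z`, the trace parameter of the inverse generators.
  have hlz : lam * z = q⁻¹ * z + (q⁻¹ - 1) := by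
    rw [hlam]; field_simp; ring
  have hIlz : I (q⁻¹ * z + (q⁻¹ - 1)) = z := by
    rw [map_add, map_mul, map_sub, map_inv₀, hIq, hIz, inv_inv, map_one, hlz]
    field_simp
    ring
  -- `tr x` and `I (tr y)` obey the same Markov rules on pairs `(x, y)` of the positive part.
  have key := Hp.Pos_le (agree I tr) (by simp [mem_agree, htr1])
    (fun a b h => by
      rw [mem_agree] at h ⊢
      rw [Prod.fst_mul, Prod.snd_mul, map_mul] at h ⊢
      rw [htrc, h, htrc])
    (fun n a ha hn h => by
      obtain ⟨h1, h2⟩ := Pos_prod_mem I ha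
      rw [mem_agree] at h ⊢
      rw [Prod.fst_mul, Prod.snd_mul, map_mul]
      simp only [pg, RingEquiv.apply_symm_apply]
      rw [htrg n _ hn h1, H.gi_eq hn, mul_add, mul_smul_comm, mul_smul_comm, mul_one, map_add,
        map_smul, map_smul, htrg n _ hn h2, h]
      have e : q⁻¹ • (z * tr a.2) + (q⁻¹ - 1) • tr a.2
          = (q⁻¹ * z + (q⁻¹ - 1)) * tr a.2 := by simp only [smul_eq_mul]; ring
      rw [e, map_mul, hIlz])
    (fun n a ha k h => by
      obtain ⟨h1, h2⟩ := Pos_prod_mem I ha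
      have e : lp (pt I t tinv) (pg I g ginv) (pg I ginv g) n = _ := lp_prod _ _ _ n
      rw [mem_agree] at h ⊢
      rw [e, Prod.fst_mul, Prod.snd_mul, map_mul, Prod.pow_fst, Prod.pow_snd, map_pow, Tw.e_lp,
        h_plus n _ k h1, h_minus n _ k h2, map_mul, hIs1, h])
  have hmem : (List.ofFn fun i : Fin (n+1) => jm (pt I t tinv) (pg I g ginv) i.1 ^ kexp i.1).prod
      ∈ Pos F (pt I t tinv) (pg I g ginv) (n+1) := by
    refine list_prod_mem fun x hx => ?_
    obtain ⟨i, rfl⟩ := (List.mem_ofFn' _ _).1 hx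
    exact pow_mem (Pos_mono (by omega) (jm_mem i.1)) _
  have hfin := mem_agree.1 (key (n+1) _ hmem)
  have hj : ∀ i, jm (pt I t tinv) (pg I g ginv) i = _ := fun i => jm_prod _ _ i
  have p1 := map_list_prod ((Tw.e I A : Tw I A →+* A).comp (RingHom.fst (Tw I A) A))
    (List.ofFn fun i : Fin (n+1) => jm (pt I t tinv) (pg I g ginv) i.1 ^ kexp i.1)
  have p2 := map_list_prod (RingHom.snd (Tw I A) A)
    (List.ofFn fun i : Fin (n+1) => jm (pt I t tinv) (pg I g ginv) i.1 ^ kexp i.1)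
  simp only [List.map_ofFn, Function.comp_def, hj, RingHom.comp_apply, RingHom.coe_fst,
    RingHom.coe_snd, RingHom.coe_coe, Prod.pow_snd, map_pow, Tw.e_jm] at p1 p2
  simp only [hj] at hfin
  rw [p1, p2] at hfin
  simpa only [ett, etti] using hfin
end

section
/- For every k ∈ ℕ and every τ ∈ Λ^{aug+}_{(k)}, the trace value tr(τ) is a linear combination, with coefficients rational functions in q and z, of monomials s_1^{u_1} s_2^{u_2} ⋯ s_v^{u_v} with u_i ∈ ℕ and Σ_{i=1}^v i·u_i = k. -/
/-! ### Spanning sets of the positive part of the Hecke algebra -/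

section Generic
variable {K B : Type*} [Field K] [Ring B] [Algebra K B]

/-- The algebra `H⁺ₙ` generated by `t` (for `n ≥ 1`) and `g₁, …, gₙ₋₁`. The inverse of `t` is left
out; the inverses of the `gᵢ` belong to it by the quadratic relation. -/
def posAlg (K : Type*) {B : Type*} [Field K] [Ring B] [Algebra K B]
    (t : B) (g : ℕ → B) (n : ℕ) : Subalgebra K B :=
  Algebra.adjoin K {x | (1 ≤ n ∧ x = t) ∨ ∃ i, 1 ≤ i ∧ i < n ∧ x = g i}

/-- The span of `H⁺ₙ gₙ H⁺ₙ` and of all `H⁺ₙ wₙʲ`, `j ≥ 0`, used with the looping elements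
`w = t_•` and `w = t'_•`. For `n = 0` the first part is omitted, since `g₀` has no meaning. -/
def bimod (K : Type*) {B : Type*} [Field K] [Ring B] [Algebra K B]
    (t : B) (g w : ℕ → B) (n : ℕ) : Submodule K B :=
  Submodule.span K
    ({x | 1 ≤ n ∧ ∃ a ∈ posAlg K t g n, ∃ b ∈ posAlg K t g n, x = a * g n * b} ∪
      {x | ∃ a ∈ posAlg K t g n, ∃ j : ℕ, x = a * w n ^ j})

/-- The defining relations of the generalized Hecke algebra of type B for `t` and `gᵢ`, where
`l i` and `l' i` are the looping elements `tᵢ` and `t'ᵢ`. Invertibility of `t` is not required. -/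
structure HeckeRel (q : K) (t : B) (g ginv : ℕ → B) (l l' : ℕ → B) : Prop where
  q_ne : q ≠ 0
  inv_mul : ∀ i, ginv i * g i = 1
  braid_t : g 1 * t * g 1 * t = t * g 1 * t * g 1
  comm_t : ∀ i, 2 ≤ i → t * g i = g i * t
  braid : ∀ i, 1 ≤ i → g i * g (i + 1) * g i = g (i + 1) * g i * g (i + 1)
  comm : ∀ i j, 1 ≤ i → i + 2 ≤ j → g i * g j = g j * g i
  quad : ∀ i, 1 ≤ i → g i * g i = (q - 1) • g i + q • (1 : B)
  l_zero : l 0 = t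
  l_succ : ∀ i, l (i + 1) = g (i + 1) * l i * g (i + 1)
  l'_zero : l' 0 = t
  l'_succ : ∀ i, l' (i + 1) = g (i + 1) * l' i * ginv (i + 1)

variable {q : K} {t : B} {g ginv l l' w : ℕ → B} {n : ℕ}

lemma t_mem (hn : 1 ≤ n) : t ∈ posAlg K t g n := Algebra.subset_adjoin (Or.inl ⟨hn, rfl⟩)

lemma g_mem {i : ℕ} (h1 : 1 ≤ i) (hi : i < n) : g i ∈ posAlg K t g n :=
  Algebra.subset_adjoin (Or.inr ⟨i, h1, hi, rfl⟩)

lemma posAlg_mono {m : ℕ} (hmn : m ≤ n) : posAlg K t g m ≤ posAlg K t g n := by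
  refine Algebra.adjoin_mono ?_
  rintro x (⟨h, rfl⟩ | ⟨i, h1, hi, rfl⟩)
  · exact Or.inl ⟨by omega, rfl⟩
  · exact Or.inr ⟨i, h1, by omega, rfl⟩

lemma posAlg_le_succ : posAlg K t g n ≤ posAlg K t g (n + 1) := posAlg_mono n.le_succ

lemma bimod_mul_g_mul (hn : 1 ≤ n) {a b : B} (ha : a ∈ posAlg K t g n) (hb : b ∈ posAlg K t g n) :
    a * g n * b ∈ bimod K t g w n :=
  Submodule.subset_span (Or.inl ⟨hn, a, ha, b, hb, rfl⟩)

lemma bimod_mul_pow {a : B} (ha : a ∈ posAlg K t g n) (j : ℕ) :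
    a * w n ^ j ∈ bimod K t g w n :=
  Submodule.subset_span (Or.inr ⟨a, ha, j, rfl⟩)

lemma bimod_pow (j : ℕ) : w n ^ j ∈ bimod K t g w n := by
  simpa using bimod_mul_pow (K := K) (t := t) (g := g) (w := w) (n := n) (one_mem _) j

lemma bimod_g_mul (hn : 1 ≤ n) {b : B} (hb : b ∈ posAlg K t g n) :
    g n * b ∈ bimod K t g w n := by
  simpa using bimod_mul_g_mul (K := K) (t := t) (g := g) (w := w) hn (one_mem _) hb

lemma bimod_g (hn : 1 ≤ n) : g n ∈ bimod K t g w n := by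
  simpa using bimod_g_mul (K := K) (t := t) (g := g) (w := w) hn (one_mem _)

lemma bimod_one : (1 : B) ∈ bimod K t g w n := by
  simpa using bimod_pow (K := K) (t := t) (g := g) (w := w) (n := n) 0

lemma bimod_induction {P : B → Prop} {x : B} (hx : x ∈ bimod K t g w n)
    (h1 : 1 ≤ n → ∀ a ∈ posAlg K t g n, ∀ b ∈ posAlg K t g n, P (a * g n * b))
    (h2 : ∀ a ∈ posAlg K t g n, ∀ j : ℕ, P (a * w n ^ j))
    (h0 : P 0) (hadd : ∀ x y, P x → P y → P (x + y)) (hsmul : ∀ (c : K) x, P x → P (c • x)) :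
    P x := by
  refine Submodule.span_induction (p := fun x _ => P x) ?_ h0 (fun x y _ _ => hadd x y)
    (fun c x _ => hsmul c x) hx
  rintro x (⟨hn, a, ha, b, hb, rfl⟩ | ⟨a, ha, j, rfl⟩)
  · exact h1 hn a ha b hb
  · exact h2 a ha j

/-- To check that a linear map sends `bimod` into a submodule, check it on the spanning set. -/
lemma bimod_map {x : B} (hx : x ∈ bimod K t g w n) (f : B →ₗ[K] B) (N : Submodule K B)
    (h1 : 1 ≤ n → ∀ a ∈ posAlg K t g n, ∀ b ∈ posAlg K t g n, f (a * g n * b) ∈ N)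
    (h2 : ∀ a ∈ posAlg K t g n, ∀ j : ℕ, f (a * w n ^ j) ∈ N) : f x ∈ N :=
  bimod_induction (P := fun x => f x ∈ N) hx h1 h2 (by simp)
    (fun x y hx hy => by simpa using add_mem hx hy)
    (fun c x hx => by simpa using N.smul_mem c hx)

lemma bimod_left {a x : B} (ha : a ∈ posAlg K t g n) (hx : x ∈ bimod K t g w n) :
    a * x ∈ bimod K t g w n := by
  refine bimod_map hx (LinearMap.mulLeft K a) _ (fun hn u hu v hv => ?_) (fun u hu j => ?_)
  · simpa [mul_assoc] using bimod_mul_g_mul (w := w) hn (mul_mem ha hu) hv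
  · simpa [mul_assoc] using bimod_mul_pow (w := w) (mul_mem ha hu) j

namespace HeckeRel

variable (H : HeckeRel q t g ginv l l')
include H

lemma g_commute {m i : ℕ} (hi : m + 1 ≤ i) {x : B} (hx : x ∈ posAlg K t g m) :
    g i * x = x * g i := by
  induction hx using Algebra.adjoin_induction with
  | mem x hx =>
    rcases hx with ⟨h, rfl⟩ | ⟨j, h1, hj, rfl⟩
    · exact (H.comm_t i (by omega)).symm
    · exact (H.comm j i h1 (by omega)).symm
  | algebraMap r => exact (Algebra.commutes r _).symm
  | add x y _ _ hx hy => rw [mul_add, add_mul, hx, hy]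
  | mul x y _ _ hx hy => rw [← mul_assoc, hx, mul_assoc, hy, mul_assoc]

lemma l_mem (n : ℕ) : l n ∈ posAlg K t g (n + 1) := by
  induction n with
  | zero => rw [H.l_zero]; exact t_mem le_rfl
  | succ n ih =>
    have hg : g (n + 1) ∈ posAlg K t g (n + 2) := g_mem (by omega) (by omega)
    rw [H.l_succ]
    exact mul_mem (mul_mem hg (posAlg_le_succ ih)) hg

lemma ginv_eq {i : ℕ} (hi : 1 ≤ i) : ginv i = q⁻¹ • (g i - (q - 1) • (1 : B)) := by
  rw [eq_inv_smul_iff₀ H.q_ne, eq_sub_iff_add_eq]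
  have := congrArg (ginv i * ·) (H.quad i hi)
  simp only [mul_add, ← mul_assoc, H.inv_mul, one_mul, mul_smul_comm, mul_one] at this
  rw [this, add_comm]

lemma l'_mem (n : ℕ) : l' n ∈ posAlg K t g (n + 1) := by
  induction n with
  | zero => rw [H.l'_zero]; exact t_mem le_rfl
  | succ n ih =>
    have hg : g (n + 1) ∈ posAlg K t g (n + 2) := g_mem (by omega) (by omega)
    rw [H.l'_succ, H.ginv_eq (by omega)]
    exact mul_mem (mul_mem hg (posAlg_le_succ ih))
      (Subalgebra.smul_mem _ (sub_mem hg (Subalgebra.smul_mem _ (one_mem _) _)) _)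

/-- The looping element `tₙ` commutes with `H⁺ₙ`. -/
lemma l_commute (n : ℕ) : ∀ x ∈ posAlg K t g n, l n * x = x * l n := by
  induction n with
  | zero =>
    intro x hx
    induction hx using Algebra.adjoin_induction with
    | mem x hx => rcases hx with ⟨h, rfl⟩ | ⟨j, h1, hj, rfl⟩ <;> omega
    | algebraMap r => exact (Algebra.commutes r _).symm
    | add x y _ _ hx hy => rw [mul_add, add_mul, hx, hy]
    | mul x y _ _ hx hy => rw [← mul_assoc, hx, mul_assoc, hy, mul_assoc]
  | succ n ih =>
    have old : ∀ x ∈ posAlg K t g n, l (n + 1) * x = x * l (n + 1) := by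
      intro x hx
      have e := H.g_commute (le_refl (n + 1)) hx
      rw [H.l_succ]
      calc g (n + 1) * l n * g (n + 1) * x = g (n + 1) * l n * (g (n + 1) * x) := by
            rw [mul_assoc]
        _ = g (n + 1) * (l n * x) * g (n + 1) := by rw [e]; simp only [mul_assoc]
        _ = (g (n + 1) * x) * l n * g (n + 1) := by rw [ih x hx]; simp only [mul_assoc]
        _ = _ := by rw [e]; simp only [mul_assoc]
    intro x hx
    induction hx using Algebra.adjoin_induction with
    | mem x hx =>
      rcases hx with ⟨h, rfl⟩ | ⟨j, h1, hj, rfl⟩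
      · rcases Nat.eq_zero_or_pos n with rfl | hn
        · rw [H.l_succ, H.l_zero, zero_add, H.braid_t]; simp only [mul_assoc]
        · exact old _ (t_mem hn)
      · rcases Nat.lt_or_ge j n with hjn | hjn
        · exact old _ (g_mem h1 hjn)
        · obtain rfl : j = n := by omega
          obtain ⟨m, rfl⟩ : ∃ m, j = m + 1 := ⟨j - 1, by omega⟩
          have e := H.g_commute (le_refl (m + 2)) (H.l_mem m)
          have b := H.braid (m + 1) (by omega)
          rw [H.l_succ, H.l_succ]
          calc g (m + 1 + 1) * (g (m + 1) * l m * g (m + 1)) * g (m + 1 + 1) * g (m + 1)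
              = g (m + 2) * g (m + 1) * l m * (g (m + 1) * g (m + 2) * g (m + 1)) := by
                simp only [mul_assoc]
            _ = g (m + 2) * g (m + 1) * (l m * g (m + 2)) * g (m + 1) * g (m + 2) := by
                rw [b]; simp only [mul_assoc]
            _ = (g (m + 2) * g (m + 1) * g (m + 2)) * l m * g (m + 1) * g (m + 2) := by
                rw [← e]; simp only [mul_assoc]
            _ = _ := by rw [← b]; simp only [mul_assoc]
    | algebraMap r => exact (Algebra.commutes r _).symm
    | add x y _ _ hx hy => rw [mul_add, add_mul, hx, hy]
    | mul x y _ _ hx hy => rw [← mul_assoc, hx, mul_assoc, hy, mul_assoc]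

lemma l_pow_commute (n j : ℕ) {x : B} (hx : x ∈ posAlg K t g n) : l n ^ j * x = x * l n ^ j :=
  (Commute.pow_left (show Commute (l n) x from H.l_commute n x hx) j).eq

lemma g_mul_l (n : ℕ) : g (n + 1) * l (n + 1) = (q - 1) • l (n + 1) + q • (l n * g (n + 1)) := by
  rw [H.l_succ, ← mul_assoc, ← mul_assoc, H.quad _ (by omega)]
  simp [add_mul, mul_assoc]

lemma l_mul_g (n : ℕ) : l (n + 1) * g (n + 1) = (q - 1) • l (n + 1) + q • (g (n + 1) * l n) := by
  rw [H.l_succ, mul_assoc (_ * _) (g _) (g _), H.quad _ (by omega)]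
  simp [mul_add, mul_assoc]

lemma bimod_right {b x : B} (hb : b ∈ posAlg K t g n) (hx : x ∈ bimod K t g l n) :
    x * b ∈ bimod K t g l n := by
  refine bimod_map hx (LinearMap.mulRight K b) _ (fun hn u hu v hv => ?_) (fun u hu j => ?_)
  · simpa [mul_assoc] using bimod_mul_g_mul (w := l) hn hu (mul_mem hv hb)
  · simpa [mul_assoc, H.l_pow_commute n j hb] using bimod_mul_pow (w := l) (mul_mem hu hb) j

lemma l_mul_g_mem (n : ℕ) : l (n + 1) * g (n + 1) ∈ bimod K t g l (n + 1) := by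
  rw [H.l_mul_g]
  refine add_mem (Submodule.smul_mem _ _ ?_) (Submodule.smul_mem _ _ ?_)
  · simpa using bimod_pow (K := K) (t := t) (g := g) (w := l) (n := n + 1) 1
  · exact bimod_g_mul (by omega) (H.l_mem n)

lemma bimod_l_mul {x : B} (hx : x ∈ bimod K t g l (n + 1)) :
    l (n + 1) * x ∈ bimod K t g l (n + 1) := by
  refine bimod_map hx (LinearMap.mulLeft K (l (n + 1))) _ (fun hn u hu v hv => ?_)
    (fun u hu j => ?_)
  · have := bimod_left hu (H.bimod_right hv (H.l_mul_g_mem n))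
    simpa [← mul_assoc, H.l_commute _ u hu] using this
  · have := bimod_mul_pow (w := l) hu (j + 1)
    simpa [← mul_assoc, H.l_commute _ u hu, pow_succ'] using this

lemma g_mul_l_pow_mem (n j : ℕ) : g (n + 1) * l (n + 1) ^ j ∈ bimod K t g l (n + 1) := by
  induction j with
  | zero => simpa using bimod_g (Nat.le_add_left 1 n)
  | succ j ih =>
    rw [pow_succ', ← mul_assoc, H.g_mul_l, add_mul, smul_mul_assoc, smul_mul_assoc, ← pow_succ',
      mul_assoc]
    exact add_mem (Submodule.smul_mem _ _ (bimod_pow _))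
      (Submodule.smul_mem _ _ (bimod_left (H.l_mem n) ih))

/-- With `g = gₙ₊₁`, this expresses `g tₙʲ⁺¹ g` through `g tₙʲ g`, and conversely moves a factor
`tₙ₊₁` past `g tₙʲ g`; it is used in both directions. -/
lemma l_mul_g_pow_g (n j : ℕ) :
    l (n + 1) * (g (n + 1) * l n ^ j * g (n + 1)) =
      (q - 1) • (l n ^ j * (l (n + 1) * g (n + 1))) + q • (g (n + 1) * l n ^ (j + 1) * g (n + 1)) := by
  have c := H.l_commute (n + 1) _ (pow_mem (H.l_mem n) j)
  calc l (n + 1) * (g (n + 1) * l n ^ j * g (n + 1))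
      = (l (n + 1) * g (n + 1)) * l n ^ j * g (n + 1) := by simp only [mul_assoc]
    _ = (q - 1) • (l (n + 1) * l n ^ j * g (n + 1)) +
          q • (g (n + 1) * l n ^ (j + 1) * g (n + 1)) := by
        rw [H.l_mul_g, pow_succ']; simp [mul_assoc, add_mul]
    _ = _ := by rw [c, mul_assoc]

lemma g_mul_l_pow_mul_g_mem (n j : ℕ) :
    g (n + 1) * l n ^ j * g (n + 1) ∈ bimod K t g l (n + 1) := by
  induction j with
  | zero =>
    rw [pow_zero, mul_one, H.quad _ (by omega)]
    refine add_mem (Submodule.smul_mem _ _ ?_) (Submodule.smul_mem _ _ ?_)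
    · exact bimod_g (by omega)
    · exact bimod_one
  | succ j ih =>
    have h1 := H.bimod_l_mul ih
    rw [l_mul_g_pow_g H] at h1
    have h2 := (Submodule.add_mem_iff_right _ (Submodule.smul_mem _ (q - 1)
      (bimod_left (pow_mem (H.l_mem n) j) (H.l_mul_g_mem n)))).1 h1
    exact (Submodule.smul_mem_iff _ H.q_ne).1 h2

/-- By the braid relation, `gₙ₊₁ (u gₙ v) gₙ₊₁ = (u gₙ) gₙ₊₁ (gₙ v)` for `u, v` of level `n`. -/
lemma g_mul_mul_g_mem {u v : B} (hu : u ∈ posAlg K t g n) (hv : v ∈ posAlg K t g n)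
    (hn : 1 ≤ n) : g (n + 1) * (u * g n * v) * g (n + 1) ∈ bimod K t g w (n + 1) := by
  have hgn : g n ∈ posAlg K t g (n + 1) := g_mem hn (by omega)
  have cu := H.g_commute (le_refl (n + 1)) hu
  have cv := H.g_commute (le_refl (n + 1)) hv
  have e : g (n + 1) * (u * g n * v) * g (n + 1) = (u * g n) * g (n + 1) * (g n * v) := by
    calc g (n + 1) * (u * g n * v) * g (n + 1)
        = (g (n + 1) * u) * g n * (v * g (n + 1)) := by simp only [mul_assoc]
      _ = u * (g (n + 1) * g n * g (n + 1)) * v := by rw [cu, ← cv]; simp only [mul_assoc]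
      _ = _ := by rw [← H.braid n hn]; simp only [mul_assoc]
  rw [e]
  exact bimod_mul_g_mul (by omega) (mul_mem (posAlg_le_succ hu) hgn)
    (mul_mem hgn (posAlg_le_succ hv))

/-- A subspace containing `1` and stable under left multiplication by the generators contains
`H⁺ₙ`. -/
lemma posAlg_le_of_left {N : Submodule K B} (h1 : 1 ∈ N)
    (hN : ∀ x ∈ N, (1 ≤ n → t * x ∈ N) ∧ ∀ i, 1 ≤ i → i < n → g i * x ∈ N) :
    ∀ x ∈ posAlg K t g n, x ∈ N := by
  have key : ∀ x ∈ posAlg K t g n, ∀ y ∈ N, x * y ∈ N := by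
    intro x hx
    induction hx using Algebra.adjoin_induction with
    | mem x hx =>
      intro y hy
      rcases hx with ⟨h, rfl⟩ | ⟨j, h1, hj, rfl⟩
      · exact (hN y hy).1 h
      · exact (hN y hy).2 j h1 hj
    | algebraMap r => intro y hy; rw [← Algebra.smul_def]; exact N.smul_mem r hy
    | add x y _ _ hx hy => intro w hw; rw [add_mul]; exact add_mem (hx w hw) (hy w hw)
    | mul x y _ _ hx hy => intro w hw; rw [mul_assoc]; exact hx _ (hy w hw)
  intro x hx
  simpa using key x hx 1 h1

/-- `H⁺ₙ₊₁` is spanned by `H⁺ₙ gₙ H⁺ₙ` and the `H⁺ₙ tₙʲ`. -/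
lemma posAlg_le_bimod (n : ℕ) : ∀ x ∈ posAlg K t g (n + 1), x ∈ bimod K t g l n := by
  induction n with
  | zero =>
    refine H.posAlg_le_of_left bimod_one ?_
    refine fun x hx => ⟨fun _ => ?_, fun i h1 hi => by omega⟩
    refine bimod_map hx (LinearMap.mulLeft K t) _ (fun hn => by omega) (fun u hu j => ?_)
    have := bimod_mul_pow (w := l) hu (j + 1)
    simpa [← mul_assoc, ← H.l_zero, H.l_commute _ u hu, pow_succ'] using this
  | succ n ih =>
    refine H.posAlg_le_of_left bimod_one ?_
    refine fun x hx => ⟨fun _ => bimod_left (t_mem (by omega)) hx, fun i h1 hi => ?_⟩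
    rcases Nat.lt_or_ge i (n + 1) with hin | hin
    · exact bimod_left (g_mem h1 hin) hx
    obtain rfl : i = n + 1 := by omega
    refine bimod_map hx (LinearMap.mulLeft K (g (n + 1))) _ (fun _ a ha b hb => ?_)
      (fun u hu j => ?_)
    · have : g (n + 1) * a * g (n + 1) ∈ bimod K t g l (n + 1) := by
        refine bimod_map (ih a ha) (LinearMap.mulRight K (g (n + 1)) ∘ₗ
          LinearMap.mulLeft K (g (n + 1))) _ (fun hn u hu v hv => ?_) (fun u hu j => ?_)
        · exact H.g_mul_mul_g_mem hu hv hn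
        · have := bimod_left (posAlg_le_succ hu) (H.g_mul_l_pow_mul_g_mem n j)
          simpa [← mul_assoc, H.g_commute (le_refl (n + 1)) hu] using this
      simpa [mul_assoc] using H.bimod_right hb this
    · have := H.bimod_right hu (H.g_mul_l_pow_mem n j)
      simpa [mul_assoc, H.l_pow_commute _ j hu] using this

lemma l'_pow_mul_g (n j : ℕ) : l' (n + 1) ^ j * g (n + 1) = g (n + 1) * l' n ^ j := by
  induction j with
  | zero => simp
  | succ j ih =>
    rw [pow_succ, mul_assoc]
    nth_rewrite 2 [H.l'_succ]
    rw [mul_assoc (g _ * _), H.inv_mul, mul_one, ← mul_assoc, ih, mul_assoc, pow_succ]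

lemma posAlg_le_bimod'_of_pow (hl : ∀ j, l n ^ j ∈ bimod K t g l' n) :
    ∀ x ∈ posAlg K t g (n + 1), x ∈ bimod K t g l' n := by
  intro x hx
  refine bimod_map (H.posAlg_le_bimod n x hx) LinearMap.id _ (fun hn u hu v hv => ?_)
    (fun u hu j => ?_)
  · exact bimod_mul_g_mul hn hu hv
  · exact bimod_left hu (hl j)

/-- `H⁺ₙ₊₁` is spanned by `H⁺ₙ gₙ H⁺ₙ` and the `H⁺ₙ t'ₙʲ`. -/
lemma posAlg_le_bimod' (n : ℕ) : ∀ x ∈ posAlg K t g (n + 1), x ∈ bimod K t g l' n := by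
  refine H.posAlg_le_bimod'_of_pow ?_
  induction n with
  | zero => intro j; rw [H.l_zero, ← H.l'_zero]; exact bimod_pow j
  | succ n ih =>
    have low := H.posAlg_le_bimod'_of_pow ih
    have hln := H.l_mem n
    have E0 : ∀ x ∈ posAlg K t g (n + 1), g (n + 1) * x * g (n + 1) ∈ bimod K t g l' (n + 1) := by
      intro x hx
      refine bimod_map (low x hx) (LinearMap.mulRight K (g (n + 1)) ∘ₗ
          LinearMap.mulLeft K (g (n + 1))) _ (fun hn u hu v hv => ?_) (fun u hu j => ?_)
      · exact H.g_mul_mul_g_mem hu hv hn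
      · have e : g (n + 1) * (u * l' n ^ j) * g (n + 1) =
            u * ((q - 1) • (g (n + 1) * l' n ^ j) + q • l' (n + 1) ^ j) := by
          rw [← mul_assoc, H.g_commute (le_refl (n + 1)) hu, mul_assoc u,
            ← H.l'_pow_mul_g, mul_assoc, mul_assoc, H.quad _ (by omega), mul_add,
            mul_smul_comm, mul_smul_comm, mul_one]
        rw [LinearMap.comp_apply, LinearMap.mulLeft_apply, LinearMap.mulRight_apply, e]
        exact bimod_left (posAlg_le_succ hu) (add_mem (Submodule.smul_mem _ _ (bimod_g_mul
          (by omega) (pow_mem (H.l'_mem n) j))) (Submodule.smul_mem _ _ (bimod_pow j)))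
    -- Multiplication by `tₙ₊₁` on the left is not known to preserve the span, so the powers of
    -- `tₙ₊₁` are treated together with two auxiliary families. The case `j = 1` of the last
    -- family at `i` is `tₙ₊₁ ^ (i + 1)`.
    have main : ∀ i, l (n + 1) ^ i ∈ bimod K t g l' (n + 1) ∧
        (∀ j, l (n + 1) ^ i * (g (n + 1) * l n ^ j) ∈ bimod K t g l' (n + 1)) ∧
        (∀ j, l (n + 1) ^ i * (g (n + 1) * l n ^ j * g (n + 1)) ∈ bimod K t g l' (n + 1)) := by
      intro i
      induction i with
      | zero =>
        refine ⟨?_, fun j => ?_, fun j => ?_⟩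
        · simpa using bimod_one
        · simpa using bimod_g_mul (by omega) (pow_mem hln j)
        · simpa using E0 _ (pow_mem hln j)
      | succ i ih =>
        obtain ⟨C, D, E⟩ := ih
        have C' : l (n + 1) ^ (i + 1) ∈ bimod K t g l' (n + 1) := by
          have := E 1
          rwa [pow_one, ← H.l_succ, ← pow_succ] at this
        have D' : ∀ j, l (n + 1) ^ (i + 1) * (g (n + 1) * l n ^ j) ∈ bimod K t g l' (n + 1) := by
          intro j
          have e : l (n + 1) ^ (i + 1) * (g (n + 1) * l n ^ j) =
              (q - 1) • (l n ^ j * l (n + 1) ^ (i + 1)) +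
                q • (l (n + 1) ^ i * (g (n + 1) * l n ^ (j + 1))) := by
            rw [← H.l_pow_commute _ _ (pow_mem hln j), pow_succ, mul_assoc, ← mul_assoc (l _) (g _),
              H.l_mul_g, pow_succ']
            simp [mul_assoc, add_mul, mul_add]
          rw [e]
          exact add_mem (Submodule.smul_mem _ _ (bimod_left (pow_mem hln j) C'))
            (Submodule.smul_mem _ _ (D _))
        refine ⟨C', D', fun j => ?_⟩
        have e : l (n + 1) ^ (i + 1) * (g (n + 1) * l n ^ j * g (n + 1)) =
            (q - 1) • (l n ^ j * (l (n + 1) ^ (i + 1) * (g (n + 1) * l n ^ 0))) +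
              q • (l (n + 1) ^ i * (g (n + 1) * l n ^ (j + 1) * g (n + 1))) := by
          rw [pow_succ, mul_assoc, l_mul_g_pow_g H, mul_add, mul_smul_comm, mul_smul_comm,
            ← mul_assoc (l (n + 1) ^ i) (l n ^ j), H.l_pow_commute _ _ (pow_mem hln j)]
          simp [mul_assoc]
        rw [e]
        exact add_mem (Submodule.smul_mem _ _ (bimod_left (pow_mem hln j) (D' 0)))
          (Submodule.smul_mem _ _ (E _))
    exact fun j => (main j).1

/-- A Markov trace with parameters `z` and `σ j ∈ W` maps every `H⁺ₙ` into `W`. -/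
lemma trace_mem {R : Type*} [CommRing R] [Algebra K R] (tr : B →ₗ[K] R) (z : K) (σ : ℕ → R)
    (W : Subalgebra K R) (hσ : ∀ j, σ j ∈ W) (h1 : tr 1 = 1)
    (hc : ∀ a b, tr (a * b) = tr (b * a))
    (hg : ∀ n, 1 ≤ n → ∀ a ∈ posAlg K t g n, tr (a * g n) = z • tr a)
    (hs : ∀ n, ∀ a ∈ posAlg K t g n, ∀ j, tr (a * l' n ^ j) = σ j * tr a) (n : ℕ) :
    ∀ x ∈ posAlg K t g n, tr x ∈ W := by
  induction n with
  | zero =>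
    refine H.posAlg_le_of_left (N := W.toSubmodule.comap tr) (by simp [h1]) ?_
    exact fun x hx => ⟨fun h => by omega, fun i h1 hi => by omega⟩
  | succ n ih =>
    intro x hx
    refine bimod_induction (P := fun x => tr x ∈ W) (H.posAlg_le_bimod' n x hx)
      (fun hn a ha b hb => ?_) (fun a ha j => ?_) (by simp)
      (fun x y hx hy => by simpa using add_mem hx hy)
      (fun c x hx => by simpa using W.smul_mem hx c)
    · rw [hc, ← mul_assoc, hg n hn _ (mul_mem hb ha)]
      exact W.smul_mem (ih _ (mul_mem hb ha)) z
    · rw [hs n a ha]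
      exact mul_mem (hσ j) (ih a ha)

end HeckeRel
end Generic

/-! ### Weighted monomials in the `s_i` -/

section Weights
variable (K : Type*) {F : Type*} [Field K] [Field F] [Algebra K F] (s : ℤ → F)

/-- The `K`-span of the monomials `s₁^{u₁} ⋯ s_v^{u_v}` with `∑ i uᵢ = k`. -/
def weightSpan (k : ℕ) : Submodule K F :=
  Submodule.span K {x | ∃ (v : ℕ) (u : ℕ → ℕ), ∑ i ∈ Finset.Icc 1 v, i * u i = k ∧
    x = ∏ i ∈ Finset.Icc 1 v, s (i : ℤ) ^ u i}

/-- A weighted monomial in `s₁, …, s_v` is one in `s₁, …, s_V` for every `V ≥ v`. -/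
lemma weight_extend {v V k : ℕ} (h : v ≤ V) {u : ℕ → ℕ}
    (hu : ∑ i ∈ Finset.Icc 1 v, i * u i = k) : ∃ u' : ℕ → ℕ,
      ∑ i ∈ Finset.Icc 1 V, i * u' i = k ∧
      ∏ i ∈ Finset.Icc 1 V, s (i : ℤ) ^ u' i = ∏ i ∈ Finset.Icc 1 v, s (i : ℤ) ^ u i := by
  have hsub : Finset.Icc 1 v ⊆ Finset.Icc 1 V := Finset.Icc_subset_Icc le_rfl h
  refine ⟨fun i => if i ∈ Finset.Icc 1 v then u i else 0, ?_, ?_⟩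
  · rw [← hu, ← Finset.sum_subset hsub]
    · exact Finset.sum_congr rfl fun i hi => by simp only [if_pos hi]
    · intro i _ hi; simp only [if_neg hi, mul_zero]
  · rw [← Finset.prod_subset hsub]
    · exact Finset.prod_congr rfl fun i hi => by simp only [if_pos hi]
    · intro i _ hi; simp only [if_neg hi, pow_zero]

lemma weightSpan_mul {k m : ℕ} {x y : F} (hx : x ∈ weightSpan K s k) (hy : y ∈ weightSpan K s m) :
    x * y ∈ weightSpan K s (k + m) := by
  have h := Submodule.mul_mem_mul hx hy
  rw [weightSpan, weightSpan, Submodule.span_mul_span] at h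
  refine Submodule.span_mono ?_ h
  rintro _ ⟨_, ⟨v, u, hu, rfl⟩, _, ⟨v', u', hu', rfl⟩, rfl⟩
  obtain ⟨a, ha, ha'⟩ := weight_extend s (le_max_left v v') hu
  obtain ⟨b, hb, hb'⟩ := weight_extend s (le_max_right v v') hu'
  refine ⟨max v v', a + b, ?_, ?_⟩
  · simp only [Pi.add_apply, mul_add, Finset.sum_add_distrib, ha, hb]
  · simp only [Pi.add_apply, pow_add, Finset.prod_mul_distrib, ha', hb']

lemma one_mem_weightSpan : (1 : F) ∈ weightSpan K s 0 :=
  Submodule.subset_span ⟨0, 0, by simp, by simp⟩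

lemma s_mem_weightSpan {j : ℕ} (hj : 1 ≤ j) : s (j : ℤ) ∈ weightSpan K s j := by
  refine Submodule.subset_span ⟨j, Pi.single j 1, ?_, ?_⟩
  · rw [Finset.sum_eq_single_of_mem j (by simp [hj])]
    · simp
    · intro i _ hi; simp [hi]
  · rw [Finset.prod_eq_single_of_mem j (by simp [hj])]
    · simp
    · intro i _ hi; simp [hi]

/-- The power series whose `k`-th coefficient lies in `weightSpan K s k` for every `k`. -/
def weightAlg : Subalgebra K (PowerSeries F) where
  carrier := {p | ∀ k, PowerSeries.coeff k p ∈ weightSpan K s k}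
  mul_mem' {p r} hp hr k := by
    rw [PowerSeries.coeff_mul]
    refine Submodule.sum_mem _ fun x hx => ?_
    rw [← Finset.HasAntidiagonal.mem_antidiagonal.1 hx]
    exact weightSpan_mul K s (hp _) (hr _)
  add_mem' {p r} hp hr k := by
    rw [map_add]
    exact add_mem (hp k) (hr k)
  algebraMap_mem' c k := by
    rw [Algebra.algebraMap_eq_smul_one, PowerSeries.coeff_smul, PowerSeries.coeff_one]
    refine Submodule.smul_mem _ _ ?_
    split_ifs with h
    · subst h; exact one_mem_weightSpan K s
    · exact zero_mem _

end Weights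

/-! ### Passage to `A[X]` -/

section PolyTrace
open Polynomial
variable (K : Type*) {F A : Type*} [Field K] [Field F] [Ring A] [Algebra K F] [Algebra F A]
  [Algebra K A] [IsScalarTower K F A]

/-- The coefficientwise extension of `tr` to `A[X]`. Power series are taken as the target only
because they are determined by an arbitrary coefficient function. -/
noncomputable def polyTrace (tr : A →ₗ[F] F) : A[X] →ₗ[K] PowerSeries F where
  toFun p := PowerSeries.mk fun m => tr (p.coeff m)
  map_add' p r := by ext m; simp
  map_smul' c p := by
    ext m
    rw [RingHom.id_apply, PowerSeries.coeff_smul, PowerSeries.coeff_mk, PowerSeries.coeff_mk,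
      coeff_smul]
    exact LinearMap.map_smul_of_tower tr c _

lemma coeff_polyTrace (tr : A →ₗ[F] F) (p : A[X]) (m : ℕ) :
    PowerSeries.coeff m (polyTrace K tr p) = tr (p.coeff m) := by
  simp [polyTrace]

lemma polyTrace_comm (tr : A →ₗ[F] F) (htrc : ∀ a b : A, tr (a * b) = tr (b * a)) (a b : A[X]) :
    polyTrace K tr (a * b) = polyTrace K tr (b * a) := by
  ext m
  rw [coeff_polyTrace, coeff_polyTrace, coeff_mul, coeff_mul, map_sum, map_sum,
    ← Finset.Nat.sum_antidiagonal_swap]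
  exact Finset.sum_congr rfl fun x _ => htrc _ _

/-- The Markov rules in `A`, stated for `Hsub`, apply to the coefficients of elements of the
positive algebra in `A[X]`. -/
lemma coeff_mem_Hsub {t tinv : A} {g ginv : ℕ → A} {n : ℕ} {a : A[X]}
    (ha : a ∈ posAlg K (C t * X) (fun i => C (g i)) n) :
    ∀ m, a.coeff m ∈ Hsub F t tinv g ginv n := by
  induction ha using Algebra.adjoin_induction with
  | mem x hx =>
    intro m
    rcases hx with ⟨h, rfl⟩ | ⟨j, h1, hj, rfl⟩
    · rw [coeff_C_mul_X]
      split_ifs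
      · exact Algebra.subset_adjoin (Or.inl ⟨h, Or.inl rfl⟩)
      · exact zero_mem _
    · rw [coeff_C]
      split_ifs
      · exact Algebra.subset_adjoin (Or.inr ⟨j, h1, hj, Or.inl rfl⟩)
      · exact zero_mem _
  | algebraMap r =>
    intro m
    rw [Algebra.algebraMap_eq_smul_one, coeff_smul, coeff_one]
    split_ifs
    · rw [← algebraMap_smul F r (1 : A)]
      exact Subalgebra.smul_mem _ (one_mem _) _
    · simp
  | add x y _ _ hx hy => intro m; rw [coeff_add]; exact add_mem (hx m) (hy m)
  | mul x y _ _ hx hy =>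
    intro m
    rw [coeff_mul]
    exact sum_mem fun p _ => mul_mem (hx _) (hy _)

lemma C_mul_X_pow (a : A) (j : ℕ) : (C a * X) ^ j = C (a ^ j) * X ^ j := by
  rw [(commute_X (C a)).symm.mul_pow, C_pow]

lemma prod_C_mul_X_pow (n : ℕ) (w : ℕ → A) (e : ℕ → ℕ) :
    (List.ofFn fun i : Fin n => (C (w i.1) * X) ^ e i.1).prod =
      C (List.ofFn fun i : Fin n => w i.1 ^ e i.1).prod * X ^ ∑ i ∈ Finset.range n, e i := by
  induction n with
  | zero => simp
  | succ n ih =>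
    rw [List.ofFn_succ', List.ofFn_succ', List.concat_eq_append, List.concat_eq_append,
      List.prod_append, List.prod_append, Finset.sum_range_succ]
    simp only [Fin.val_castSucc, Fin.val_last, List.prod_singleton]
    rw [ih, C_mul_X_pow, C_mul, pow_add, mul_assoc, mul_assoc, ← mul_assoc (X ^ _) (C _),
      X_pow_mul, mul_assoc]

/-- The relations for `t, gᵢ` in `A` give those for `t X, gᵢ` in `A[X]`. -/
lemma heckeRel_poly {q : K} (hq0 : q ≠ 0) {t : A} {g ginv : ℕ → A}
    (hg' : ∀ i, ginv i * g i = 1)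
    (hbt : g 1 * t * g 1 * t = t * g 1 * t * g 1)
    (hct : ∀ i, 2 ≤ i → t * g i = g i * t)
    (hbr : ∀ i, 1 ≤ i → g i * g (i+1) * g i = g (i+1) * g i * g (i+1))
    (hcm : ∀ i j, 1 ≤ i → i + 2 ≤ j → g i * g j = g j * g i)
    (hq2 : ∀ i, 1 ≤ i → g i * g i = (q - 1) • g i + q • (1 : A))
    {tt tp : ℕ → A}
    (htt0 : tt 0 = t) (htts : ∀ i, tt (i+1) = g (i+1) * tt i * g (i+1))
    (htp0 : tp 0 = t) (htps : ∀ i, tp (i+1) = g (i+1) * tp i * ginv (i+1)) :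
    HeckeRel q (C t * X) (fun i => C (g i)) (fun i => C (ginv i))
      (fun i => C (tt i) * X) (fun i => C (tp i) * X) := by
  have hX : ∀ a b : A, C a * X * C b = C (a * b) * X := fun a b => by
    rw [mul_assoc, X_mul_C, ← mul_assoc, C_mul]
  refine ⟨hq0, fun i => ?_, ?_, fun i hi => ?_, fun i hi => ?_,
    fun i j hi hj => ?_, fun i hi => ?_, ?_, fun i => ?_, ?_, fun i => ?_⟩
  · simp only [← C_mul, hg', C_1]
  · simp only [← mul_assoc, ← C_mul, hX, hbt]
    rw [mul_assoc _ X (C _), X_mul_C, ← mul_assoc, hX]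
  · rw [hX, ← mul_assoc, ← C_mul, hct i hi]
  · simp only [← C_mul, hbr i hi]
  · simp only [← C_mul, hcm i j hi hj]
  · simp only [← C_mul, hq2 i hi, C_add]
    rw [← smul_C, ← smul_C, C_1]
  · simp only [htt0]
  · simp only [htts, ← mul_assoc, ← C_mul, hX]
  · simp only [htp0]
  · simp only [htps, ← mul_assoc, ← C_mul, hX]

/-- The trace of `t^{k₀} t₁^{k₁} ⋯ tₙ^{kₙ}` has weight `∑ kᵢ`, over any field `K ⊆ F` containing
`q` and `z`. -/
lemma tr_mem_weightSpan {q z : K} (hq0 : q ≠ 0) {t tinv : A} {g ginv : ℕ → A}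
    (hg' : ∀ i, ginv i * g i = 1)
    (hbt : g 1 * t * g 1 * t = t * g 1 * t * g 1)
    (hct : ∀ i, 2 ≤ i → t * g i = g i * t)
    (hbr : ∀ i, 1 ≤ i → g i * g (i+1) * g i = g (i+1) * g i * g (i+1))
    (hcm : ∀ i j, 1 ≤ i → i + 2 ≤ j → g i * g j = g j * g i)
    (hq2 : ∀ i, 1 ≤ i → g i * g i = (q - 1) • g i + q • (1 : A))
    {tt tp tpinv : ℕ → A}
    (htt0 : tt 0 = t) (htts : ∀ i, tt (i+1) = g (i+1) * tt i * g (i+1))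
    (htp0 : tp 0 = t) (htps : ∀ i, tp (i+1) = g (i+1) * tp i * ginv (i+1))
    (s : ℤ → F) (tr : A →ₗ[F] F)
    (htr1 : tr 1 = 1)
    (htrc : ∀ a b : A, tr (a * b) = tr (b * a))
    (htrg : ∀ (n : ℕ) (a : A), 1 ≤ n → a ∈ Hsub F t tinv g ginv n →
      tr (a * g n) = z • tr a)
    (htrs : ∀ (n : ℕ) (a : A) (k : ℤ), a ∈ Hsub F t tinv g ginv n →
      tr (a * zp (tp n) (tpinv n) k) = s k * tr a)
    (k n : ℕ) (kexp : ℕ → ℕ) (hsum : ∑ i ∈ Finset.range (n+1), kexp i = k) :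
    tr ((List.ofFn fun i : Fin (n+1) => tt i.1 ^ kexp i.1).prod) ∈ weightSpan K s k := by
  have H := heckeRel_poly K hq0 hg' hbt hct hbr hcm hq2 htt0 htts htp0 htps
  have hs0 : s 0 = 1 := by
    have := htrs 0 1 0 (one_mem _)
    simpa [zp, htr1] using this.symm
  have hW := H.trace_mem (polyTrace K tr) z
    (fun j => PowerSeries.C (s j) * PowerSeries.X ^ j) (weightAlg K s) ?_ ?_
    (polyTrace_comm K tr htrc) ?_ ?_ (n + 1)
    (List.ofFn fun i : Fin (n + 1) => (C (tt i.1) * X) ^ kexp i.1).prod ?_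
  · have h := hW k
    rwa [coeff_polyTrace, prod_C_mul_X_pow, hsum, coeff_C_mul_X_pow, if_pos rfl] at h
  · intro j m
    rw [PowerSeries.coeff_C_mul, PowerSeries.coeff_X_pow]
    split_ifs with h
    · subst h
      rw [mul_one]
      rcases Nat.eq_zero_or_pos m with rfl | hm
      · simpa [hs0] using one_mem_weightSpan K s
      · exact s_mem_weightSpan K s hm
    · simp
  · ext m
    rw [coeff_polyTrace, coeff_one, PowerSeries.coeff_one]
    split_ifs
    · exact htr1
    · simp
  · intro m hm a ha
    ext d
    rw [coeff_polyTrace, coeff_mul_C, PowerSeries.coeff_smul, coeff_polyTrace,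
      htrg m _ hm (coeff_mem_Hsub K ha d)]
  · intro m a ha j
    ext d
    have hzp := fun e => htrs m _ j (coeff_mem_Hsub K ha (tinv := tinv) (ginv := ginv) e)
    simp only [zp, Int.natCast_nonneg, if_true, Int.toNat_natCast] at hzp
    rw [coeff_polyTrace, C_mul_X_pow, ← mul_assoc, coeff_mul_X_pow', mul_assoc,
      PowerSeries.coeff_C_mul, PowerSeries.coeff_X_pow_mul', coeff_mul_C]
    split_ifs
    · rw [coeff_polyTrace, hzp]
    · simp
  · refine Subalgebra.list_prod_mem _ fun x hx => ?_
    obtain ⟨i, rfl⟩ := (List.mem_ofFn' _ _).1 hx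
    exact pow_mem (posAlg_mono (Nat.succ_le_of_lt i.2) (H.l_mem i.1)) _

end PolyTrace

/-- Lemma 5 of the paper: for every `k ∈ ℕ` and every
`τ ∈ Λᵃᵘᵍ⁺_{(k)}`, `tr(τ)` is a linear combination, with coefficients rational
functions in `q` and `z`, of monomials `s_1^{u_1} s_2^{u_2} ⋯ s_v^{u_v}` with
`∑_{i=1}^v i·u_i = k`. -/
theorem homflypt_stmt16
    {F : Type*} [Field F] {A : Type*} [Ring A] [Algebra F A]
    (q z : F) (hq0 : q ≠ 0) (hz0 : z ≠ 0)
    (t tinv : A) (g ginv : ℕ → A)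
    (ht : t * tinv = 1) (ht' : tinv * t = 1)
    (hg : ∀ i, g i * ginv i = 1) (hg' : ∀ i, ginv i * g i = 1)
    (hbt : g 1 * t * g 1 * t = t * g 1 * t * g 1)
    (hct : ∀ i, 2 ≤ i → t * g i = g i * t)
    (hbr : ∀ i, 1 ≤ i → g i * g (i+1) * g i = g (i+1) * g i * g (i+1))
    (hcm : ∀ i j, 1 ≤ i → i + 2 ≤ j → g i * g j = g j * g i)
    (hq2 : ∀ i, 1 ≤ i → g i * g i = (q - 1) • g i + q • (1 : A))
    (tt ttinv tp tpinv : ℕ → A)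
    (htt0 : tt 0 = t) (htts : ∀ i, tt (i+1) = g (i+1) * tt i * g (i+1))
    (htti0 : ttinv 0 = tinv)
    (httis : ∀ i, ttinv (i+1) = ginv (i+1) * ttinv i * ginv (i+1))
    (htp0 : tp 0 = t) (htps : ∀ i, tp (i+1) = g (i+1) * tp i * ginv (i+1))
    (htpi0 : tpinv 0 = tinv)
    (htpis : ∀ i, tpinv (i+1) = g (i+1) * tpinv i * ginv (i+1))
    (s : ℤ → F) (tr : A →ₗ[F] F)
    (htr1 : tr 1 = 1)
    (htrc : ∀ a b : A, tr (a * b) = tr (b * a))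
    (htrg : ∀ (n : ℕ) (a : A), 1 ≤ n → a ∈ Hsub F t tinv g ginv n →
      tr (a * g n) = z * tr a)
    (htrs : ∀ (n : ℕ) (a : A) (k : ℤ), a ∈ Hsub F t tinv g ginv n →
      tr (a * zp (tp n) (tpinv n) k) = s k * tr a)
    (k : ℕ) (n : ℕ) (kexp : ℕ → ℕ) (hpos : ∀ i ≤ n, 1 ≤ kexp i)
    (hsum : ∑ i ∈ Finset.range (n+1), kexp i = k) :
    ∃ (m : ℕ) (c : Fin m → F) (v : Fin m → ℕ) (u : Fin m → ℕ → ℕ),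
      (∀ j, c j ∈ Subfield.closure {q, z})
        ∧ (∀ j, ∑ i ∈ Finset.Icc 1 (v j), i * u j i = k)
        ∧ tr ((List.ofFn fun i : Fin (n+1) => tt i.1 ^ kexp i.1).prod)
            = ∑ j, c j * ∏ i ∈ Finset.Icc 1 (v j), s (i : ℤ) ^ u j i := by
  have hqK : q ∈ Subfield.closure {q, z} := Subfield.subset_closure (by simp)
  have hzK : z ∈ Subfield.closure {q, z} := Subfield.subset_closure (by simp)
  have h := tr_mem_weightSpan (Subfield.closure {q, z}) (q := ⟨q, hqK⟩) (z := ⟨z, hzK⟩)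
    (fun h => hq0 (congrArg Subtype.val h)) hg' hbt hct hbr hcm hq2 htt0 htts htp0 htps s tr
    htr1 htrc htrg htrs k n kexp hsum
  rw [weightSpan, Submodule.mem_span_set'] at h
  obtain ⟨m, c, y, hy⟩ := h
  choose v u hu hyu using fun j => (y j).2
  refine ⟨m, fun j => c j, v, u, fun j => (c j).2, hu, ?_⟩
  rw [← hy]
  exact Finset.sum_congr rfl fun j _ => by rw [hyu j]; rfl
end
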